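/- arXiv:2211.07732 — 4 statements merged into one kernel-verified Lean document; each statement's English description precedes it below -/
import Mathlib

section
/- There exists a constant C > 0 such that for every n ≥ 2 and every graph G on n vertices, there is a collection 𝒫 of paths in G with |𝒫| ≤ C · n · log* n such that 𝒫 strongly separates the edge set of G. In the paper's notation, sep(n) = O(n log* n). -/
/-!
The linear bound `sep(n) ≤ 24 n` holds, and `log* n ≥ 1` for `n ≥ 2`, so `C = 24` works. The bound
is proved by induction on a vertex set `U`, covering the edges inside `U`.

* Rotations (`exists_posa`). Let `p` be a longest path inside `U`. Fix its last vertex and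
  perform Pósa rotations at the other end; let `S` be the set of all endpoints obtained. By
  maximality the neighbours of `S` in `U` lie on `p`. A vertex `y ∉ S` adjacent to `S` must be next
  on `p` to a vertex of `S`, as otherwise both `p`-edges at `y` survive all rotations, and rotating
  at `y` makes one of its `p`-neighbours an endpoint. Hence the edges meeting `S` span a set `W` of
  at most `3 |S|` positions of `p`.
* Zigzags (`exists_zigzag`). Let `M` be a family of edges whose pairs of positions on `p` are
  strictly nested. Going through `M` from the outermost edge inwards and joining consecutive
  edges by segments of `p`, alternately on the right and on the left, gives a path through all of
  `M`. Starting with the other side gives a second such path, and the two share only `M`.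
* Separation (`exists_layer`). Rank the positions in `W`. The edges with given `r(i) + r(j)` are
  nested, and so are those with given `r(i) + 2 r(j)`; the two values together determine the edge.
  Two zigzags for every value of the first form and one for every value of the second separate all
  the edges that meet `S` and are not on `p`: two such edges are told apart by one of the two
  values, and an edge of `p` is missed by one of the two zigzags for the first value. The edges
  of `p` within `W` are added as one-edge paths. This uses at most `8 |W| ≤ 24 |S|` paths, and
  the induction continues with `U \ S`.
-/


/-- The iterated (base-2) logarithm: the least number of times the base-2 logarithm
has to be applied, starting with `n`, to obtain a number smaller than 1. -/
def logStar : ℕ → ℕ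
  | 0 => 0
  | (n+1) => logStar (Nat.log 2 (n+1)) + 1
decreasing_by exact Nat.log_lt_self 2 (Nat.succ_ne_zero n)

open Finset

namespace PathSep

variable {V : Type}

/-! ### Pósa rotations -/

/-- `p 0, …, p (L - 1)` is a path of `G` with all its vertices in `U`; the values of `p` from `L` on
are irrelevant. -/
structure IsSeqPath (G : SimpleGraph V) (U : Finset V) (L : ℕ) (p : ℕ → V) : Prop where
  mem : ∀ k < L, p k ∈ U
  inj : ∀ j < L, ∀ k < L, p j = p k → j = k
  adj : ∀ k, k + 1 < L → G.Adj (p k) (p (k + 1))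

/-- The sequence with its initial part `q 0, …, q i` reversed. -/
def rot (i : ℕ) (q : ℕ → V) (k : ℕ) : V := if k ≤ i then q (i - k) else q k

/-- The sequences obtained from `p` by rotations that move the first vertex and keep the last one. -/
inductive Reach (G : SimpleGraph V) (L : ℕ) (p : ℕ → V) : (ℕ → V) → Prop
  | base : Reach G L p p
  | step (q : ℕ → V) (i : ℕ) : Reach G L p q → i + 1 < L → G.Adj (q 0) (q (i + 1)) →
      Reach G L p (rot i q)

/-- The first vertices of the sequences obtained from `p` by rotations. -/
def Ends (G : SimpleGraph V) (L : ℕ) (p : ℕ → V) : Set V := {u | ∃ q, Reach G L p q ∧ q 0 = u}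

/-- `x` and `y` are consecutive, in either order, among `q 0, …, q (L - 1)`. -/
def Con (L : ℕ) (q : ℕ → V) (x y : V) : Prop :=
  ∃ k, k + 1 < L ∧ ((q k = x ∧ q (k + 1) = y) ∨ (q k = y ∧ q (k + 1) = x))

lemma IsSeqPath.rot {G : SimpleGraph V} {U : Finset V} {L : ℕ} {q : ℕ → V}
    (h : IsSeqPath G U L q) {i : ℕ} (hi : i + 1 < L) (ha : G.Adj (q 0) (q (i + 1))) :
    IsSeqPath G U L (rot i q) := by
  refine ⟨fun k hk => ?_, fun j hj k hk e => ?_, fun k hk => ?_⟩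
  · unfold PathSep.rot
    split_ifs
    · exact h.mem _ (by omega)
    · exact h.mem _ hk
  · unfold PathSep.rot at e
    split_ifs at e
    · have := h.inj _ (by omega) _ (by omega) e
      omega
    · have := h.inj _ (by omega) _ (by omega) e
      omega
    · have := h.inj _ (by omega) _ (by omega) e
      omega
    · exact h.inj _ hj _ hk e
  · unfold PathSep.rot
    split_ifs with h1 h2 h2
    · have := h.adj (i - (k + 1)) (by omega)
      rw [show i - (k + 1) + 1 = i - k by omega] at this
      exact this.symm
    · obtain rfl : k = i := by omega
      simpa using ha
    · omega
    · exact h.adj k hk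

lemma Reach.isSeqPath {G : SimpleGraph V} {U : Finset V} {L : ℕ} {p q : ℕ → V}
    (hp : IsSeqPath G U L p) (h : Reach G L p q) : IsSeqPath G U L q := by
  induction h with
  | base => exact hp
  | step q i _ hi ha ih => exact ih.rot hi ha

lemma Reach.range {G : SimpleGraph V} {L : ℕ} {p q : ℕ → V} (h : Reach G L p q) :
    ∀ k < L, ∃ j < L, p j = q k := by
  induction h with
  | base => exact fun k hk => ⟨k, hk, rfl⟩
  | step q i _ hi ha ih =>
    intro k hk
    unfold rot
    split_ifs
    · exact ih _ (by omega)
    · exact ih k hk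

lemma Reach.last {G : SimpleGraph V} {L : ℕ} {p q : ℕ → V} (h : Reach G L p q) :
    q (L - 1) = p (L - 1) := by
  induction h with
  | base => rfl
  | step q i _ hi ha ih =>
    unfold rot
    rw [if_neg (by omega), ih]

/-- A rotation removes a single edge, and one end of that edge becomes the new first vertex. -/
lemma Reach.con {G : SimpleGraph V} {L : ℕ} {p q : ℕ → V} (h : Reach G L p q) :
    ∀ k, k + 1 < L → Con L q (p k) (p (k + 1)) ∨ p k ∈ Ends G L p ∨ p (k + 1) ∈ Ends G L p := by
  induction h with
  | base => exact fun k hk => .inl ⟨k, hk, .inl ⟨rfl, rfl⟩⟩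
  | step q i hq hi ha ih =>
    intro k hk
    have hnew : q i ∈ Ends G L p := ⟨_, .step q i hq hi ha, by simp [rot]⟩
    rcases ih k hk with ⟨l, hl, hc⟩ | h
    · rcases lt_trichotomy l i with hli | rfl | hli
      · refine .inl ⟨i - (l + 1), by omega, ?_⟩
        have e1 : rot i q (i - (l + 1)) = q (l + 1) := by
          unfold rot
          rw [if_pos (by omega)]
          congr 1
          omega
        have e2 : rot i q (i - (l + 1) + 1) = q l := by
          unfold rot
          rw [if_pos (by omega)]
          congr 1
          omega
        rw [e1, e2]
        tauto
      · rcases hc with ⟨h1, -⟩ | ⟨h1, -⟩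
        · exact .inr (.inl (h1 ▸ hnew))
        · exact .inr (.inr (h1 ▸ hnew))
      · refine .inl ⟨l, hl, ?_⟩
        have e1 : rot i q l = q l := if_neg (by omega)
        have e2 : rot i q (l + 1) = q (l + 1) := if_neg (by omega)
        rw [e1, e2]
        exact hc
    · exact .inr h

/-- A `U`-neighbour of an endpoint lies on the maximal path `p`, at distance at most `1` along `p`
from an endpoint. -/
lemma Reach.nbr {G : SimpleGraph V} {U : Finset V} {L : ℕ} {p q : ℕ → V}
    (hp : IsSeqPath G U L p) (hL : 0 < L)
    (hmax : ∀ L' p', IsSeqPath G U L' p' → L' ≤ L)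
    (h : Reach G L p q) {y : V} (hy : y ∈ U) (ha : G.Adj (q 0) y) :
    ∃ j < L, p j = y ∧ (p j ∈ Ends G L p ∨ (1 ≤ j ∧ p (j - 1) ∈ Ends G L p) ∨
      (j + 1 < L ∧ p (j + 1) ∈ Ends G L p)) := by
  have hq := h.isSeqPath hp
  -- Otherwise prepending `y` to `q` would give a longer path.
  obtain ⟨l, hl, rfl⟩ : ∃ l < L, q l = y := by
    by_contra! hcon
    have := hmax (L + 1) (fun k => if k = 0 then y else q (k - 1)) ⟨?_, ?_, ?_⟩
    · omega
    · intro k hk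
      split_ifs
      · exact hy
      · exact hq.mem _ (by omega)
    · intro j hj k hk e
      split_ifs at e
      · omega
      · exact absurd e.symm (hcon _ (by omega))
      · exact absurd e (hcon _ (by omega))
      · have := hq.inj _ (by omega) _ (by omega) e
        omega
    · intro k hk
      rcases Nat.eq_zero_or_pos k with rfl | hk0
      · simpa using ha.symm
      · rw [if_neg (by omega), if_neg (by omega)]
        have := hq.adj (k - 1) (by omega)
        rwa [show k - 1 + 1 = k + 1 - 1 by omega] at this
  have hl0 : l ≠ 0 := by
    rintro rfl
    exact ha.ne rfl
  have hnew : q (l - 1) ∈ Ends G L p :=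
    ⟨_, .step q (l - 1) h (by omega) (by rwa [show l - 1 + 1 = l by omega]), by simp [rot]⟩
  obtain ⟨j, hj, hjl⟩ := h.range l hl
  refine ⟨j, hj, hjl, ?_⟩
  by_contra! hcon
  obtain ⟨c1, c2, c3⟩ := hcon
  have hj0 : j ≠ 0 := by
    rintro rfl
    exact c1 ⟨p, .base, rfl⟩
  have A := h.con (j - 1) (by omega)
  rw [show j - 1 + 1 = j by omega] at A
  -- The predecessor of `y` on `p` can only be the successor of `y` on `q`.
  have A' : l + 1 < L ∧ q (l + 1) = p (j - 1) := by
    rcases A with ⟨k, hk, ⟨h1, h2⟩ | ⟨h1, h2⟩⟩ | A | A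
    · have := hq.inj _ hk _ hl (h2.trans hjl)
      subst this
      exact absurd (h1 ▸ hnew) (c2 (by omega))
    · have := hq.inj _ (by omega) _ hl (h1.trans hjl)
      subst this
      exact ⟨hk, h2⟩
    · exact absurd A (c2 (by omega))
    · exact absurd A c1
  have hjL : j + 1 < L := by
    by_contra hjL
    have hlast := h.last
    rw [show L - 1 = j by omega, hjl] at hlast
    have := hq.inj _ hj _ hl hlast
    omega
  rcases h.con j hjL with ⟨k, hk, ⟨h1, h2⟩ | ⟨h1, h2⟩⟩ | B | B
  · have := hq.inj _ (by omega) _ hl (h1.trans hjl)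
    subst this
    have := hp.inj _ (by omega) _ (by omega) (A'.2.symm.trans h2)
    omega
  · have := hq.inj _ hk _ hl (h2.trans hjl)
    subst this
    exact c3 hjL (h1 ▸ hnew)
  · exact c1 B
  · exact c3 hjL B

/-- There are a path `p` and a nonempty `S` such that the edges inside `U` that meet `S` have both
ends among at most `3 |S|` positions of `p`. -/
lemma exists_posa (G : SimpleGraph V) (U : Finset V) (hU : U.Nonempty) :
    ∃ (p : ℕ → V) (L : ℕ) (S : Finset V) (W : Finset ℕ), IsSeqPath G U L p ∧ S ⊆ U ∧
      S.Nonempty ∧ (∀ k ∈ W, k < L) ∧ #W ≤ 3 * #S ∧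
      ∀ x ∈ S, ∀ y ∈ U, G.Adj x y → (∃ i ∈ W, p i = x) ∧ ∃ j ∈ W, p j = y := by
  classical
  obtain ⟨u, hu⟩ := hU
  have hbound : ∀ L p, IsSeqPath G U L p → L ≤ #U := by
    intro L p hp
    have := card_le_card_of_injOn (s := range L) (t := U) p
      (fun k hk => hp.mem k (by simpa using hk))
      (fun j hj k hk e => hp.inj j (by simpa using hj) k (by simpa using hk) e)
    simpa using this
  have hone : ∃ p, IsSeqPath G U 1 p :=
    ⟨fun _ => u, fun _ _ => hu, fun j hj k hk _ => by omega, fun k hk => by omega⟩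
  have hone' : 1 ≤ #U := hbound 1 _ hone.choose_spec
  set L := Nat.findGreatest (fun L => ∃ p, IsSeqPath G U L p) #U with hLdef
  obtain ⟨p, hp⟩ : ∃ p, IsSeqPath G U L p :=
    Nat.findGreatest_spec (P := fun L => ∃ p, IsSeqPath G U L p) hone' hone
  have hL : 0 < L := Nat.le_findGreatest (P := fun L => ∃ p, IsSeqPath G U L p) hone' hone
  have hmax : ∀ L' p', IsSeqPath G U L' p' → L' ≤ L := fun L' p' h =>
    Nat.le_findGreatest (P := fun L => ∃ p, IsSeqPath G U L p) (hbound _ _ h) ⟨p', h⟩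
  set T := {k ∈ range L | p k ∈ Ends G L p} with hT
  have hTmem : ∀ k, k ∈ T ↔ k < L ∧ p k ∈ Ends G L p := by simp [hT]
  have hS : ∀ x ∈ T.image p, ∃ q, Reach G L p q ∧ q 0 = x := by
    intro x hx
    obtain ⟨k, hk, rfl⟩ := mem_image.1 hx
    exact ((hTmem k).1 hk).2
  refine ⟨p, L, T.image p, {k ∈ T ∪ T.image (· + 1) ∪ T.image (· - 1) | k < L}, hp, ?_, ?_, ?_, ?_,
    ?_⟩
  · intro x hx
    obtain ⟨k, hk, rfl⟩ := mem_image.1 hx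
    exact hp.mem k ((hTmem k).1 hk).1
  · exact ⟨p 0, mem_image_of_mem _ ((hTmem 0).2 ⟨hL, p, .base, rfl⟩)⟩
  · intro k hk
    exact (mem_filter.1 hk).2
  · have hc : #(T.image p) = #T := card_image_of_injOn fun j hj k hk e =>
      hp.inj j ((hTmem j).1 hj).1 k ((hTmem k).1 hk).1 e
    rw [hc]
    have h1 := card_filter_le (T ∪ T.image (· + 1) ∪ T.image (· - 1)) (· < L)
    have h2 := card_union_le (T ∪ T.image (· + 1)) (T.image (· - 1))
    have h3 := card_union_le T (T.image (· + 1))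
    have h4 : #(T.image (· + 1)) ≤ #T := card_image_le
    have h5 : #(T.image (· - 1)) ≤ #T := card_image_le
    omega
  · intro x hx y hy ha
    constructor
    · obtain ⟨k, hk, rfl⟩ := mem_image.1 hx
      exact ⟨k, by simp [hk, ((hTmem k).1 hk).1], rfl⟩
    · obtain ⟨q, hq, rfl⟩ := hS x hx
      obtain ⟨j, hj, hjy, hc⟩ := hq.nbr hp hL hmax hy ha
      refine ⟨j, mem_filter.2 ⟨?_, hj⟩, hjy⟩
      rcases hc with hc | ⟨h1, hc⟩ | ⟨h1, hc⟩
      · exact mem_union_left _ (mem_union_left _ ((hTmem j).2 ⟨hj, hc⟩))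
      · exact mem_union_left _ (mem_union_right _
          (mem_image.2 ⟨j - 1, (hTmem _).2 ⟨by omega, hc⟩, by omega⟩))
      · exact mem_union_right _ (mem_image.2 ⟨j + 1, (hTmem _).2 ⟨h1, hc⟩, by omega⟩)

/-! ### Zigzag paths -/

/-- `E` is the edge set of a path of `G`. -/
def IsPathEdges (G : SimpleGraph V) (E : Set (Sym2 V)) : Prop :=
  ∃ u v, ∃ w : G.Walk u v, w.IsPath ∧ ∀ e, e ∈ w.edges ↔ e ∈ E

/-- `E` is the edge set of a path of `G` starting at `p a` whose vertices have positions between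
`lo` and `hi`. -/
def Arm (G : SimpleGraph V) (p : ℕ → V) (a lo hi : ℕ) (E : Set (Sym2 V)) : Prop :=
  ∃ y, ∃ w : G.Walk (p a) y, w.IsPath ∧ (∀ x ∈ w.support, ∃ k, lo ≤ k ∧ k ≤ hi ∧ p k = x) ∧
    ∀ e, e ∈ w.edges ↔ e ∈ E

/-- The edges of the segment of `p` between the positions `a` and `b`. -/
def Seg (p : ℕ → V) (a b : ℕ) : Set (Sym2 V) := {e | ∃ k, a ≤ k ∧ k < b ∧ e = s(p k, p (k + 1))}

/-- The pair of vertices of `p` at a pair of positions. -/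
def ed (p : ℕ → V) (e : ℕ × ℕ) : Sym2 V := s(p e.1, p e.2)

section

variable {G : SimpleGraph V} {U : Finset V} {L : ℕ} {p : ℕ → V}

lemma Arm.isPathEdges {a lo hi : ℕ} {E : Set (Sym2 V)} (h : Arm G p a lo hi E) :
    IsPathEdges G E := by
  obtain ⟨y, w, h1, -, h2⟩ := h
  exact ⟨_, y, w, h1, h2⟩

lemma Arm.nil (a : ℕ) : Arm G p a a a ∅ :=
  ⟨_, .nil, .nil, fun x hx => ⟨a, le_rfl, le_rfl, by simpa [eq_comm] using hx⟩, by simp⟩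

lemma Arm.cons (hp : IsSeqPath G U L p) {a b lo hi lo' hi' : ℕ} {E : Set (Sym2 V)}
    (h : Arm G p a lo hi E) (hL : hi < L) (hb : b < L) (hout : b < lo ∨ hi < b)
    (h1 : lo' ≤ lo) (h2 : hi ≤ hi') (h3 : lo' ≤ b) (h4 : b ≤ hi') (ha : G.Adj (p b) (p a)) :
    Arm G p b lo' hi' (insert s(p b, p a) E) := by
  obtain ⟨y, w, hw, hs, he⟩ := h
  refine ⟨y, .cons ha w, ?_, ?_, ?_⟩
  · rw [SimpleGraph.Walk.cons_isPath_iff]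
    refine ⟨hw, fun hm => ?_⟩
    obtain ⟨k, hk1, hk2, hk⟩ := hs _ hm
    have := hp.inj _ (by omega) _ hb hk
    omega
  · intro x hx
    rw [SimpleGraph.Walk.support_cons, List.mem_cons] at hx
    rcases hx with rfl | hx
    · exact ⟨b, h3, h4, rfl⟩
    · obtain ⟨k, hk1, hk2, hk⟩ := hs _ hx
      exact ⟨k, by omega, by omega, hk⟩
  · intro e
    rw [SimpleGraph.Walk.edges_cons, List.mem_cons, he, Set.mem_insert_iff]

lemma Arm.mem {a lo hi : ℕ} {E : Set (Sym2 V)} (hp : IsSeqPath G U L p)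
    (h : Arm G p a lo hi E) (hL : hi < L) {k : ℕ} (hk : k < L) {x : Sym2 V} (hx : x ∈ E)
    (hkx : p k ∈ x) : lo ≤ k ∧ k ≤ hi := by
  obtain ⟨y, w, hw, hs, he⟩ := h
  obtain ⟨z, rfl⟩ := hkx
  obtain ⟨l, h1, h2, h3⟩ := hs _ (w.fst_mem_support_of_mem_edges ((he _).2 hx))
  have := hp.inj _ (by omega) _ hk h3
  omega

lemma Arm.down (hp : IsSeqPath G U L p) {hi : ℕ} (hL : hi < L) (d : ℕ) :
    ∀ {a : ℕ} {E : Set (Sym2 V)}, a + d ≤ hi → Arm G p (a + d) (a + d) hi E →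
      Arm G p a a hi (E ∪ Seg p a (a + d)) := by
  induction d with
  | zero =>
    intro a E _ h
    have : Seg p a (a + 0) = ∅ := by
      ext x
      simp only [Seg, Set.mem_ofPred_eq, Set.mem_empty_iff_false, iff_false]
      rintro ⟨k, h1, h2, -⟩
      omega
    rw [this, Set.union_empty]
    exact h
  | succ d ih =>
    intro a E hle h
    have h' := ih (a := a + 1) (E := E) (by omega) (by rwa [show a + 1 + d = a + (d + 1) by omega])
    have := h'.cons hp (b := a) (lo' := a) (hi' := hi) hL (by omega) (by omega) (by omega) le_rfl
      le_rfl (by omega) (hp.adj a (by omega))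
    convert this using 1
    ext x
    simp only [Seg, Set.mem_union, Set.mem_ofPred_eq, Set.mem_insert_iff]
    constructor
    · rintro (h | ⟨k, h1, h2, rfl⟩)
      · exact .inr (.inl h)
      · rcases h1.eq_or_lt with rfl | h1
        · exact .inl rfl
        · exact .inr (.inr ⟨k, h1, by omega, rfl⟩)
    · rintro (rfl | h | ⟨k, h1, h2, rfl⟩)
      · exact .inr ⟨a, le_rfl, by omega, rfl⟩
      · exact .inl h
      · exact .inr ⟨k, by omega, by omega, rfl⟩

lemma Arm.up (hp : IsSeqPath G U L p) {a lo : ℕ} {E : Set (Sym2 V)} (hlo : lo ≤ a)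
    (h : Arm G p a lo a E) (d : ℕ) (hL : a + d < L) :
    Arm G p (a + d) lo (a + d) (E ∪ Seg p a (a + d)) := by
  induction d with
  | zero =>
    have : Seg p a (a + 0) = ∅ := by
      ext x
      simp only [Seg, Set.mem_ofPred_eq, Set.mem_empty_iff_false, iff_false]
      rintro ⟨k, h1, h2, -⟩
      omega
    rw [this, Set.union_empty]
    exact h
  | succ d ih =>
    have := (ih (by omega)).cons hp (b := a + d + 1) (lo' := lo) (hi' := a + d + 1) (by omega) hL
      (by omega) le_rfl (by omega) (by omega) le_rfl (hp.adj (a + d) hL).symm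
    have key : E ∪ Seg p a (a + (d + 1)) =
        insert s(p (a + d + 1), p (a + d)) (E ∪ Seg p a (a + d)) := by
      ext x
      simp only [Seg, Set.mem_union, Set.mem_ofPred_eq, Set.mem_insert_iff]
      constructor
      · rintro (h | ⟨k, h1, h2, rfl⟩)
        · exact .inr (.inl h)
        · by_cases hk : k = a + d
          · subst hk
            exact .inl Sym2.eq_swap
          · exact .inr (.inr ⟨k, h1, by omega, rfl⟩)
      · rintro (rfl | h | ⟨k, h1, h2, rfl⟩)
        · exact .inr ⟨a + d, by omega, by omega, Sym2.eq_swap⟩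
        · exact .inl h
        · exact .inr ⟨k, by omega, by omega, rfl⟩
    rw [key]
    exact this

lemma seg_mono {a b a' b' : ℕ} (h1 : a' ≤ a) (h2 : b ≤ b') : Seg p a b ⊆ Seg p a' b' := by
  rintro x ⟨k, h3, h4, rfl⟩
  exact ⟨k, by omega, by omega, rfl⟩

/-- Strictly nested edges lie on two paths, one starting at each end of the outermost edge, that use
otherwise only edges of `p` and share no edge outside `M`. Adding a new outermost edge
interchanges the roles of the two paths. -/
lemma exists_arms (hp : IsSeqPath G U L p) (M : Finset (ℕ × ℕ))
    (hM : ∀ e ∈ M, e.1 < e.2 ∧ e.2 < L ∧ G.Adj (p e.1) (p e.2))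
    (hnest : ∀ e ∈ M, ∀ f ∈ M, e ≠ f → (e.1 < f.1 ∧ f.2 < e.2) ∨ (f.1 < e.1 ∧ e.2 < f.2))
    (hne : M.Nonempty) :
    ∃ a ∈ M, (∀ e ∈ M, a.1 ≤ e.1 ∧ e.2 ≤ a.2) ∧ ∃ A B : Set (Sym2 V),
      Arm G p a.1 a.1 a.2 A ∧ Arm G p a.2 a.1 a.2 B ∧ (∀ e ∈ M, ed p e ∈ A ∧ ed p e ∈ B) ∧
      (∀ x ∈ A, (∃ e ∈ M, x = ed p e) ∨ x ∈ Seg p a.1 a.2) ∧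
      (∀ x ∈ B, (∃ e ∈ M, x = ed p e) ∨ x ∈ Seg p a.1 a.2) ∧
      ∀ x ∈ A, x ∈ B → ∃ e ∈ M, x = ed p e := by
  classical
  induction M using Finset.induction_on_min_value (fun e : ℕ × ℕ => e.1) with
  | empty => simp at hne
  | insert b M hbM hmin ih =>
    obtain ⟨hb1, hb2, hb3⟩ := hM b (mem_insert_self _ _)
    rcases M.eq_empty_or_nonempty with rfl | hne'
    · refine ⟨b, by simp, by simp, insert s(p b.1, p b.2) ∅, insert s(p b.2, p b.1) ∅, ?_, ?_, ?_, ?_, ?_,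
        ?_⟩
      · exact (Arm.nil b.2).cons hp hb2 (by omega) (.inl hb1) hb1.le le_rfl le_rfl hb1.le hb3
      · exact (Arm.nil b.1).cons hp (by omega) (by omega) (.inr hb1) le_rfl hb1.le hb1.le le_rfl
          hb3.symm
      · simp [ed, Sym2.eq_swap]
      · simp [ed]
      · simp [ed, Sym2.eq_swap]
      · simp [ed]
    · obtain ⟨a, haM, hout, A, B, hA, hB, hMAB, hA', hB', hAB⟩ :=
        ih (fun e he => hM e (mem_insert_of_mem he))
          (fun e he f hf => hnest e (mem_insert_of_mem he) f (mem_insert_of_mem hf)) hne'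
      have hba : ∀ e ∈ M, b.1 < e.1 ∧ e.2 < b.2 := by
        intro e he
        have h1 := hmin e he
        rcases hnest b (mem_insert_self _ _) e (mem_insert_of_mem he)
          (by rintro rfl; exact hbM he) with h | h
        · exact h
        · omega
      obtain ⟨ha1, ha2, -⟩ := hM a (mem_insert_of_mem haM)
      obtain ⟨hba1, hba2⟩ := hba a haM
      obtain ⟨d, hd⟩ : ∃ d, b.2 = a.2 + d := ⟨b.2 - a.2, by omega⟩
      obtain ⟨c, hc⟩ : ∃ c, a.1 = b.1 + c := ⟨a.1 - b.1, by omega⟩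
      have hBup := hB.up hp ha1.le d (by omega)
      rw [← hd] at hBup
      have hAdown := Arm.down hp ha2 c (a := b.1) (E := A) (by omega) (by rwa [← hc])
      rw [← hc] at hAdown
      refine ⟨b, mem_insert_self _ _, ?_, insert s(p b.1, p b.2) (B ∪ Seg p a.2 b.2),
        insert s(p b.2, p b.1) (A ∪ Seg p b.1 a.1), ?_, ?_, ?_, ?_, ?_, ?_⟩
      · intro e he
        rcases mem_insert.1 he with rfl | he
        · exact ⟨le_rfl, le_rfl⟩
        · exact ⟨(hba e he).1.le, (hba e he).2.le⟩
      · exact hBup.cons hp hb2 (by omega) (.inl hba1) hba1.le le_rfl le_rfl hb1.le hb3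
      · exact hAdown.cons hp ha2 hb2 (.inr hba2) le_rfl hba2.le hb1.le le_rfl hb3.symm
      · intro e he
        rcases mem_insert.1 he with rfl | he
        · exact ⟨.inl rfl, .inl Sym2.eq_swap⟩
        · exact ⟨.inr (.inl (hMAB e he).2), .inr (.inl (hMAB e he).1)⟩
      · rintro x (rfl | hx | hx)
        · exact .inl ⟨b, mem_insert_self _ _, rfl⟩
        · rcases hB' x hx with ⟨e, he, rfl⟩ | hx
          · exact .inl ⟨e, mem_insert_of_mem he, rfl⟩
          · exact .inr (seg_mono hba1.le hba2.le hx)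
        · exact .inr (seg_mono (by omega) le_rfl hx)
      · rintro x (rfl | hx | hx)
        · exact .inl ⟨b, mem_insert_self _ _, Sym2.eq_swap⟩
        · rcases hA' x hx with ⟨e, he, rfl⟩ | hx
          · exact .inl ⟨e, mem_insert_of_mem he, rfl⟩
          · exact .inr (seg_mono hba1.le hba2.le hx)
        · exact .inr (seg_mono le_rfl (by omega) hx)
      · rintro x (rfl | hx)
        · exact fun _ => ⟨b, mem_insert_self _ _, rfl⟩
        · rintro (rfl | hx')
          · exact ⟨b, mem_insert_self _ _, Sym2.eq_swap⟩
          · rcases hx with hx | ⟨k, hk1, hk2, rfl⟩ <;> rcases hx' with hx' | ⟨l, hl1, hl2, hl⟩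
            · obtain ⟨e, he, rfl⟩ := hAB x hx' hx
              exact ⟨e, mem_insert_of_mem he, rfl⟩
            · have := hB.mem hp ha2 (k := l) (by omega) hx (by simp [hl])
              omega
            · have := hA.mem hp ha2 (k := k + 1) (by omega) hx' (by simp)
              omega
            · rcases Sym2.eq_iff.1 hl with ⟨h1, h2⟩ | ⟨h1, h2⟩
              · have := hp.inj _ (by omega) _ (by omega) h1
                omega
              · have := hp.inj _ (by omega) _ (by omega) h1
                omega

/-- The two zigzags through a family of strictly nested edges. -/
lemma exists_zigzag (hp : IsSeqPath G U L p) (M : Finset (ℕ × ℕ))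
    (hM : ∀ e ∈ M, e.1 < e.2 ∧ e.2 < L ∧ G.Adj (p e.1) (p e.2))
    (hnest : ∀ e ∈ M, ∀ f ∈ M, e ≠ f → (e.1 < f.1 ∧ f.2 < e.2) ∨ (f.1 < e.1 ∧ e.2 < f.2)) :
    ∃ A B : Set (Sym2 V), IsPathEdges G A ∧ IsPathEdges G B ∧
      (∀ e ∈ M, ed p e ∈ A ∧ ed p e ∈ B) ∧
      (∀ x, x ∈ A ∨ x ∈ B → (∃ e ∈ M, x = ed p e) ∨ ∃ k, k + 1 < L ∧ x = s(p k, p (k + 1))) ∧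
      ∀ x ∈ A, x ∈ B → ∃ e ∈ M, x = ed p e := by
  rcases M.eq_empty_or_nonempty with rfl | hne
  · exact ⟨∅, ∅, (Arm.nil (p := p) 0).isPathEdges, (Arm.nil (p := p) 0).isPathEdges, by simp,
      by simp, by simp⟩
  · obtain ⟨a, haM, -, A, B, hA, hB, h1, h2, h3, h4⟩ := exists_arms hp M hM hnest hne
    have ha := (hM a haM).2.1
    refine ⟨A, B, hA.isPathEdges, hB.isPathEdges, h1, ?_, h4⟩
    rintro x (hx | hx)
    · exact (h2 x hx).imp_right fun ⟨k, hk1, hk2, hk⟩ => ⟨k, by omega, hk⟩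
    · exact (h3 x hx).imp_right fun ⟨k, hk1, hk2, hk⟩ => ⟨k, by omega, hk⟩

end

/-! ### Separating the edges that meet a set of endpoints -/

/-- At most `8 |W|` paths separate all edges within the positions `W` of `p` from all other edges. -/
lemma exists_layer {G : SimpleGraph V} {U : Finset V} {L : ℕ} {p : ℕ → V}
    (hp : IsSeqPath G U L p) (W : Finset ℕ) (hW : ∀ k ∈ W, k < L) :
    ∃ F : Finset (Set (Sym2 V)), (∀ E ∈ F, IsPathEdges G E) ∧ #F ≤ 8 * #W ∧
      ∀ i ∈ W, ∀ j ∈ W, i < j → G.Adj (p i) (p j) → ∀ f, f ≠ s(p i, p j) →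
        ∃ E ∈ F, s(p i, p j) ∈ E ∧ f ∉ E := by
  classical
  set r : ℕ → ℕ := fun i => #{k ∈ W | k < i} with hr
  have hrlt : ∀ i ∈ W, r i < #W := fun i hi =>
    card_lt_card (filter_ssubset.2 ⟨i, hi, lt_irrefl i⟩)
  have hrmono : ∀ i ∈ W, ∀ j, i < j → r i < r j := by
    intro i hi j hij
    refine card_lt_card ((ssubset_iff_of_subset ?_).2 ⟨i, by simp [hi, hij], by simp⟩)
    intro k hk
    rw [mem_filter] at hk ⊢
    exact ⟨hk.1, hk.2.trans hij⟩
  have hrinj : ∀ i ∈ W, ∀ j ∈ W, r i = r j → i = j := by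
    intro i hi j hj h
    rcases lt_trichotomy i j with h' | h' | h'
    · have := hrmono i hi j h'
      omega
    · exact h'
    · have := hrmono j hj i h'
      omega
  have hrlt' : ∀ i ∈ W, ∀ j ∈ W, r i < r j → i < j := by
    intro i hi j hj h
    rcases lt_trichotomy i j with h' | rfl | h'
    · exact h'
    · omega
    · have := hrmono j hj i h'
      omega
  -- The edges `(i, j)` off `p` with `r i + c * r j = s`.
  set M : ℕ → ℕ → Finset (ℕ × ℕ) := fun c s =>
    {e ∈ W ×ˢ W | (e.1 + 1 < e.2 ∧ G.Adj (p e.1) (p e.2)) ∧ r e.1 + c * r e.2 = s} with hMdef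
  have hMmem : ∀ c s e, e ∈ M c s ↔ (e.1 ∈ W ∧ e.2 ∈ W) ∧
      (e.1 + 1 < e.2 ∧ G.Adj (p e.1) (p e.2)) ∧ r e.1 + c * r e.2 = s := by
    simp [hMdef]
  have hzig : ∀ c s, c = 1 ∨ c = 2 → ∃ A B : Set (Sym2 V), IsPathEdges G A ∧ IsPathEdges G B ∧
      (∀ e ∈ M c s, ed p e ∈ A ∧ ed p e ∈ B) ∧
      (∀ x, x ∈ A ∨ x ∈ B → (∃ e ∈ M c s, x = ed p e) ∨
        ∃ k, k + 1 < L ∧ x = s(p k, p (k + 1))) ∧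
      ∀ x ∈ A, x ∈ B → ∃ e ∈ M c s, x = ed p e := by
    intro c s hc
    refine exists_zigzag hp (M c s) ?_ ?_
    · intro e he
      obtain ⟨⟨h1, h2⟩, ⟨h3, h4⟩, -⟩ := (hMmem _ _ _).1 he
      exact ⟨by omega, hW _ h2, h4⟩
    · intro e he f hf hef
      obtain ⟨⟨e1, e2⟩, -, e3⟩ := (hMmem _ _ _).1 he
      obtain ⟨⟨f1, f2⟩, -, f3⟩ := (hMmem _ _ _).1 hf
      rcases lt_trichotomy (r e.1) (r f.1) with h | h | h
      · refine .inl ⟨hrlt' _ e1 _ f1 h, hrlt' _ f2 _ e2 ?_⟩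
        rcases hc with rfl | rfl <;> omega
      · refine absurd (Prod.ext (hrinj _ e1 _ f1 h) (hrinj _ e2 _ f2 ?_)) hef
        rcases hc with rfl | rfl <;> omega
      · refine .inr ⟨hrlt' _ f1 _ e1 h, hrlt' _ e2 _ f2 ?_⟩
        rcases hc with rfl | rfl <;> omega
  choose A₁ B₁ hA₁ hB₁ hM₁ hsub₁ hint₁ using fun s => hzig 1 s (.inl rfl)
  choose A₂ B₂ hA₂ hB₂ hM₂ hsub₂ hint₂ using fun s => hzig 2 s (.inr rfl)
  set T : Finset ℕ := {k ∈ W | k + 1 < L} with hT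
  set single : ℕ → Set (Sym2 V) := fun k => {s(p k, p (k + 1))} with hsingle
  refine ⟨(range (2 * #W)).image A₁ ∪ (range (2 * #W)).image B₁ ∪ (range (3 * #W)).image A₂ ∪
    T.image single, ?_, ?_, ?_⟩
  · intro E hE
    simp only [mem_union, mem_image, or_assoc] at hE
    rcases hE with ⟨s, -, rfl⟩ | ⟨s, -, rfl⟩ | ⟨s, -, rfl⟩ | ⟨k, hk, rfl⟩
    · exact hA₁ s
    · exact hB₁ s
    · exact hA₂ s
    · have hk := hp.adj k (mem_filter.1 hk).2
      refine ⟨p k, p (k + 1), .cons hk .nil, ?_, ?_⟩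
      · rw [SimpleGraph.Walk.cons_isPath_iff]
        exact ⟨.nil, by simpa using hk.ne⟩
      · simp [hsingle]
  · have h1 := card_union_le ((range (2 * #W)).image A₁ ∪ (range (2 * #W)).image B₁ ∪
      (range (3 * #W)).image A₂) (T.image single)
    have h2 := card_union_le ((range (2 * #W)).image A₁ ∪ (range (2 * #W)).image B₁)
      ((range (3 * #W)).image A₂)
    have h3 := card_union_le ((range (2 * #W)).image A₁) ((range (2 * #W)).image B₁)
    have h4 : #((range (2 * #W)).image A₁) ≤ 2 * #W := card_image_le.trans (card_range _).le
    have h5 : #((range (2 * #W)).image B₁) ≤ 2 * #W := card_image_le.trans (card_range _).le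
    have h6 : #((range (3 * #W)).image A₂) ≤ 3 * #W := card_image_le.trans (card_range _).le
    have h7 : #(T.image single) ≤ #W := card_image_le.trans (card_filter_le _ _)
    omega
  · intro i hi j hj hij ha f hf
    rcases (show i + 1 ≤ j from hij).eq_or_lt with rfl | hij'
    · refine ⟨single i, ?_, rfl, hf⟩
      exact mem_union_right _ (mem_image_of_mem _ (mem_filter.2 ⟨hi, hW _ hj⟩))
    · have hri := hrlt i hi
      have hrj := hrlt j hj
      have m1 : (i, j) ∈ M 1 (r i + 1 * r j) := (hMmem _ _ _).2 ⟨⟨hi, hj⟩, ⟨hij', ha⟩, rfl⟩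
      have m2 : (i, j) ∈ M 2 (r i + 2 * r j) := (hMmem _ _ _).2 ⟨⟨hi, hj⟩, ⟨hij', ha⟩, rfl⟩
      have fA : A₁ (r i + 1 * r j) ∈ (range (2 * #W)).image A₁ ∪ (range (2 * #W)).image B₁ ∪
          (range (3 * #W)).image A₂ ∪ T.image single :=
        mem_union_left _ (mem_union_left _ (mem_union_left _
          (mem_image_of_mem _ (mem_range.2 (by omega)))))
      have fB : B₁ (r i + 1 * r j) ∈ (range (2 * #W)).image A₁ ∪ (range (2 * #W)).image B₁ ∪
          (range (3 * #W)).image A₂ ∪ T.image single :=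
        mem_union_left _ (mem_union_left _ (mem_union_right _
          (mem_image_of_mem _ (mem_range.2 (by omega)))))
      have fC : A₂ (r i + 2 * r j) ∈ (range (2 * #W)).image A₁ ∪ (range (2 * #W)).image B₁ ∪
          (range (3 * #W)).image A₂ ∪ T.image single :=
        mem_union_left _ (mem_union_right _ (mem_image_of_mem _ (mem_range.2 (by omega))))
      by_contra! hcon
      have g1 := hcon _ fA (hM₁ _ _ m1).1
      have g2 := hcon _ fB (hM₁ _ _ m1).2
      have g3 := hcon _ fC (hM₂ _ _ m2).1
      -- `f` lies on both zigzags of the first kind, so it is not an edge of `p`.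
      obtain ⟨⟨a, b⟩, hab, rfl⟩ := hint₁ _ f g1 g2
      obtain ⟨⟨a1, b1⟩, ⟨ab, -⟩, e1⟩ := (hMmem _ _ _).1 hab
      dsimp only [ed] at *
      rcases hsub₂ _ _ (.inl g3) with ⟨⟨c, d⟩, hcd, he⟩ | ⟨k, hk, he⟩
      · obtain ⟨⟨c1, d1⟩, ⟨cd, -⟩, e2⟩ := (hMmem _ _ _).1 hcd
        dsimp only [ed] at *
        have hac : a = c ∧ b = d := by
          rcases Sym2.eq_iff.1 he with ⟨h1, h2⟩ | ⟨h1, h2⟩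
          · exact ⟨hp.inj _ (hW _ a1) _ (hW _ c1) h1, hp.inj _ (hW _ b1) _ (hW _ d1) h2⟩
          · have h3 := hp.inj _ (hW _ a1) _ (hW _ d1) h1
            have h4 := hp.inj _ (hW _ b1) _ (hW _ c1) h2
            omega
        obtain ⟨rfl, rfl⟩ := hac
        have h1 := hrinj a a1 i hi (by omega)
        have h2 := hrinj b b1 j hj (by omega)
        subst h1 h2
        exact hf rfl
      · rcases Sym2.eq_iff.1 he with ⟨h1, h2⟩ | ⟨h1, h2⟩
        · have h3 := hp.inj _ (hW _ a1) _ (by omega) h1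
          have h4 := hp.inj _ (hW _ b1) _ (by omega) h2
          omega
        · have h3 := hp.inj _ (hW _ a1) _ (by omega) h1
          have h4 := hp.inj _ (hW _ b1) _ (by omega) h2
          omega

/-- At most `24 |U|` paths separate all edges inside `U` from all other edges. -/
lemma exists_family (G : SimpleGraph V) (U : Finset V) :
    ∃ F : Finset (Set (Sym2 V)), (∀ E ∈ F, IsPathEdges G E) ∧ #F ≤ 24 * #U ∧
      ∀ x ∈ U, ∀ y ∈ U, G.Adj x y → ∀ f, f ≠ s(x, y) → ∃ E ∈ F, s(x, y) ∈ E ∧ f ∉ E := by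
  classical
  induction U using Finset.strongInduction with
  | H U ih =>
    rcases U.eq_empty_or_nonempty with rfl | hU
    · exact ⟨∅, by simp⟩
    · obtain ⟨p, L, S, W, hp, hSU, hS, hW, hcard, hN⟩ := exists_posa G U hU
      obtain ⟨F₁, h1, h2, h3⟩ := ih (U \ S) (sdiff_ssubset hSU hS)
      obtain ⟨F₂, g1, g2, g3⟩ := exists_layer hp W hW
      -- An edge with one end in `S` is separated by the second family.
      have key : ∀ x ∈ S, ∀ y ∈ U, G.Adj x y → ∀ f, f ≠ s(x, y) →
          ∃ E ∈ F₂, s(x, y) ∈ E ∧ f ∉ E := by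
        intro x hx y hy ha f hf
        obtain ⟨⟨i, hi, rfl⟩, j, hj, rfl⟩ := hN x hx y hy ha
        rcases lt_trichotomy i j with hij | rfl | hij
        · exact g3 i hi j hj hij ha f hf
        · exact absurd rfl ha.ne
        · rw [Sym2.eq_swap] at hf ⊢
          exact g3 j hj i hi hij ha.symm f hf
      refine ⟨F₁ ∪ F₂, ?_, ?_, ?_⟩
      · intro E hE
        exact (mem_union.1 hE).elim (h1 E) (g1 E)
      · have h4 := card_union_le F₁ F₂
        have h5 := card_sdiff_add_card_eq_card hSU
        omega
      · intro x hx y hy ha f hf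
        by_cases hxS : x ∈ S
        · obtain ⟨E, hE, h⟩ := key x hxS y hy ha f hf
          exact ⟨E, mem_union_right _ hE, h⟩
        by_cases hyS : y ∈ S
        · rw [Sym2.eq_swap] at hf ⊢
          obtain ⟨E, hE, h⟩ := key y hyS x hx ha.symm f hf
          exact ⟨E, mem_union_right _ hE, h⟩
        · obtain ⟨E, hE, h⟩ := h3 x (mem_sdiff.2 ⟨hx, hxS⟩) y (mem_sdiff.2 ⟨hy, hyS⟩) ha f hf
          exact ⟨E, mem_union_left _ hE, h⟩

end PathSep

/-- `sep(n) = O(n log* n)`: there is a constant `C > 0` such that every graph on `n ≥ 2`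
vertices admits a collection of at most `C · n · log* n` paths that strongly separates
its edge set. -/
theorem sep_upper_bound_n_logstar :
    ∃ C : ℝ, 0 < C ∧
      ∀ (n : ℕ), 2 ≤ n → ∀ (V : Type) [Fintype V], Fintype.card V = n →
        ∀ (G : SimpleGraph V),
          ∃ Ps : List ((u : V) × (v : V) × G.Walk u v),
            (∀ p ∈ Ps, p.2.2.IsPath) ∧
            ((Ps.length : ℝ) ≤ C * n * logStar n) ∧
            (∀ e ∈ G.edgeSet, ∀ f ∈ G.edgeSet, e ≠ f →
              ∃ p ∈ Ps, e ∈ p.2.2.edges ∧ f ∉ p.2.2.edges) := by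
  refine ⟨24, by norm_num, fun n hn V _ hV G => ?_⟩
  obtain ⟨F, hF, hcard, hsep⟩ := PathSep.exists_family G (univ : Finset V)
  have hF' : ∀ E : {E // E ∈ F}, ∃ q : (u : V) × (v : V) × G.Walk u v,
      q.2.2.IsPath ∧ ∀ e, e ∈ q.2.2.edges ↔ e ∈ E.1 := by
    rintro ⟨E, hE⟩
    obtain ⟨u, v, w, h1, h2⟩ := hF E hE
    exact ⟨⟨u, v, w⟩, h1, h2⟩
  choose q hq1 hq2 using hF'
  refine ⟨F.attach.toList.map q, ?_, ?_, ?_⟩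
  · intro w hw
    obtain ⟨E, -, rfl⟩ := List.mem_map.1 hw
    exact hq1 E
  · have hlog : 1 ≤ logStar n := by
      obtain ⟨m, rfl⟩ : ∃ m, n = m + 1 := ⟨n - 1, by omega⟩
      rw [logStar]
      omega
    have hlen : (F.attach.toList.map q).length ≤ 24 * n := by
      rw [List.length_map, length_toList, card_attach]
      rwa [card_univ, hV] at hcard
    have hlen' : (F.attach.toList.map q).length ≤ 24 * n * logStar n :=
      hlen.trans (Nat.le_mul_of_pos_right _ hlog)
    exact_mod_cast hlen'
  · intro e he f _ hef
    induction e using Sym2.ind with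
    | h x y =>
      obtain ⟨E, hE, h1, h2⟩ := hsep x (mem_univ _) y (mem_univ _) he f hef.symm
      refine ⟨q ⟨E, hE⟩, List.mem_map.2 ⟨⟨E, hE⟩, by simp, rfl⟩, (hq2 _ _).2 h1, ?_⟩
      exact fun h => h2 ((hq2 _ _).1 h)
end

section
/- For every graph G on n vertices and every integer d ≥ 1, the edge set of G can be decomposed into at most e(G)/d + n pairwise edge-disjoint paths, each of length at most d. -/
/-!
Cutting a path of length `ℓ` into pieces of length at most `d` produces at most `ℓ / d + 1` pieces,
so it is enough to decompose `G` into at most `n` paths. For this, call `D(v)` the number of path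
ends at `v` (a one-vertex path has two ends there). It is shown that some decomposition, one-vertex
paths being allowed, has `D(v) = 1` at odd vertices and `D(v) = 2` at even ones; counting ends
gives at most `n` paths.

The engine is Lovász's edge-addition lemma (`HasDec.add_edge`): if `ab` is a non-edge, `D(b) ≥ 1`
and every neighbour of `a` has `D ≥ 1`, then `ab` can be added while moving just one path end from
`b` to `a`. Cut every path through `a` into its arms at `a`. An arm can be reversed, so that it is
attached to `a` by its former free end, without changing the vertex set of its path. Attach to `a`
a path end at `b`. If it belongs to a path avoiding `a`, the proof is complete. If it is the free
end of an arm, the first vertex `w` of that arm is now detached from `a`; continue with `w` in place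
of `b`. Distinct arms start at distinct vertices, so no arm is used twice and the process stops
(`flip_chain`).

The induction on the edges allows in addition a set `Z` of even vertices, at most one of them
non-isolated, on which `D = 0` is required (`tgt`, `Good`, `hasDec_tgt`).
* If `z ∈ Z` has a neighbour `x`, delete `xz`, and replace `z` by `x` in `Z` when `x` is odd.
  Adding `xz` back moves an end from `z` to `x` (`case_zero`).
* If all of `Z` is isolated and `b` is an odd vertex with neighbour `a`, delete `ab`, and put `a`
  into `Z` when `a` is odd. Adding `ab` back moves an end from `b` to `a` (`case_odd`).
* If all vertices are even and some edge `ab` exists, put `b` into `Z`, which gives the first case,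
  and then add the one-vertex path at `b`.
-/

namespace ShortPaths

open Finset

/-! ### Paths as vertex lists -/

variable {V : Type}

/-- The multiset of edges joining consecutive entries of a list of vertices. -/
def edg : List V → Multiset (Sym2 V)
  | [] => 0
  | [_] => 0
  | x :: y :: l => s(x, y) ::ₘ edg (y :: l)

/-- The two ends of a vertex list; the vertex of a one-vertex list counts twice. -/
def ends : List V → Multiset V
  | [] => 0
  | x :: l => {x} + {l.getLastD x}

/-- The edge, if any, from `a` to the first vertex of a list. -/
def link (a : V) : List V → Multiset (Sym2 V)
  | [] => 0
  | x :: _ => {s(a, x)}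

lemma edg_cons (a : V) (l : List V) : edg (a :: l) = link a l + edg l := by
  cases l <;> simp [edg, link]

/-- The edges of a path through `x` are those of its two arms at `x`; the left arm `l` is read
starting from `x`. -/
lemma edg_join (x : V) (l r : List V) :
    edg (l.reverse ++ x :: r) = edg (x :: l) + edg (x :: r) := by
  induction l generalizing x r with
  | nil => simp [edg]
  | cons y l ih =>
    rw [List.reverse_cons, List.append_assoc, List.singleton_append, ih]
    simp only [edg]
    rw [Sym2.eq_swap, Multiset.cons_add, Multiset.add_cons]

lemma edg_reverse (l : List V) : edg l.reverse = edg l := by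
  cases l with
  | nil => rfl
  | cons x l => simpa [edg] using edg_join x l []

lemma headD_reverse (a : V) (l : List V) : l.reverse.headD a = l.getLastD a := by
  rw [List.headD_eq_head?_getD, List.head?_reverse, List.getLastD_eq_getLast?]

lemma getLastD_reverse (a : V) (l : List V) : l.reverse.getLastD a = l.headD a := by
  rw [List.headD_eq_head?_getD, List.getLastD_eq_getLast?, List.getLast?_reverse]

lemma ends_eq (a : V) (l : List V) (h : l ≠ []) : ends l = {l.headD a} + {l.getLastD a} := by
  cases l with
  | nil => simp at h
  | cons x l => simp [ends, List.getLast?_cons]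

lemma ends_join (x : V) (l r : List V) :
    ends (l.reverse ++ x :: r) = {l.getLastD x} + {r.getLastD x} := by
  rw [ends_eq x _ (by simp)]
  congr 1
  · rw [← headD_reverse]; cases l.reverse <;> simp
  · simp [List.getLast?_append, List.getLast?_cons]

lemma ends_reverse (l : List V) : ends l.reverse = ends l := by
  cases l with
  | nil => rfl
  | cons x l => simpa [ends, add_comm] using ends_join x l []

lemma link_eq (a : V) (l : List V) (h : l ≠ []) : link a l = {s(a, l.headD a)} := by
  cases l <;> simp_all [link]

/-! ### Adding an edge -/

/-- The combinatorial core of the edge-addition lemma. The indices in `S` are arms attached at `h i`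
with free end `t i`, and `F` is the set of ends of the paths avoiding the centre. Reversing the arms
in `T` and attaching a path end `c ∈ F` adds exactly `b` to the attached vertices. In the induction,
an arm with free end `b` is reversed and discarded, and its start takes the role of `b`. -/
lemma flip_chain [DecidableEq V] {κ : Type} [DecidableEq κ] (h t : κ → V) (F : Set V)
    (S : Finset κ) (b : V)
    (hinj : Set.InjOn h S) (hb : ∀ i ∈ S, h i ≠ b) (hbF : b ∈ F ∨ ∃ i ∈ S, t i = b)
    (hF : ∀ i ∈ S, h i ∈ F ∨ ∃ j ∈ S, t j = h i) :
    ∃ T ⊆ S, ∃ c ∈ F,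
      {c} + ∑ i ∈ S, ({if i ∈ T then t i else h i} : Multiset V) = {b} + ∑ i ∈ S, {h i} := by
  induction S using Finset.strongInduction generalizing b with
  | H S ih =>
    rcases hbF with hbF | ⟨i, hi, rfl⟩
    · exact ⟨∅, by simp, b, hbF, by simp⟩
    · obtain ⟨T, hT, c, hc, e⟩ := ih (S.erase i) (erase_ssubset hi) (h i)
        (hinj.mono (by simp))
        (fun j hj he => (mem_erase.1 hj).1 (hinj (mem_erase.1 hj).2 hi he))
        (by
          rcases hF i hi with h1 | ⟨j, hj, h1⟩
          · exact .inl h1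
          · refine .inr ⟨j, mem_erase.2 ⟨?_, hj⟩, h1⟩
            rintro rfl; exact hb _ hi h1.symm)
        (by
          intro k hk
          rcases hF k (mem_erase.1 hk).2 with h1 | ⟨j, hj, h1⟩
          · exact .inl h1
          · refine .inr ⟨j, mem_erase.2 ⟨?_, hj⟩, h1⟩
            rintro rfl; exact hb _ (mem_erase.1 hk).2 h1.symm)
      refine ⟨insert i T, insert_subset hi (hT.trans (erase_subset _ _)), c, hc, ?_⟩
      rw [← add_sum_erase S _ hi, ← add_sum_erase S (fun i => ({h i} : Multiset V)) hi, ← e]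
      have : ∑ x ∈ S.erase i, ({if x ∈ insert i T then t x else h x} : Multiset V)
          = ∑ x ∈ S.erase i, {if x ∈ T then t x else h x} := by
        refine sum_congr rfl fun x hx => ?_
        simp [(mem_erase.1 hx).1]
      rw [this]
      simp only [mem_insert_self, if_true]
      abel


/-- `E` decomposes into the edges of a finite family of paths in which every vertex `v` occurs
exactly `f v` times as a path end. Paths are nonempty duplicate-free vertex lists, one-vertex lists
included; the equality of multisets says that each edge of `E` is covered exactly once. -/
def HasDec [DecidableEq V] (E : Finset (Sym2 V)) (f : V → ℕ) : Prop :=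
  ∃ (ι : Type) (_ : Fintype ι) (P : ι → List V), (∀ i, P i ≠ [] ∧ (P i).Nodup) ∧
    ∑ i, edg (P i) = E.val ∧ ∀ v, (∑ i, ends (P i)).count v = f v

/-- The list `l`, reversed when `c` holds. -/
def rev (c : Prop) [Decidable c] (l : List V) : List V := if c then l.reverse else l

/-- Arms of `p` at `a`, both read starting from `a`; they are empty if `p` avoids `a`. -/
lemma exists_split (a : V) (p : List V) : ∃ l r : List V,
    (a ∈ p ∧ p = l.reverse ++ a :: r) ∨ (a ∉ p ∧ l = [] ∧ r = []) := by
  by_cases h : a ∈ p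
  · obtain ⟨l, r, rfl⟩ := List.append_of_mem h
    exact ⟨l.reverse, r, .inl ⟨h, by simp⟩⟩
  · exact ⟨[], [], .inr ⟨h, rfl, rfl⟩⟩

lemma headD_mem (a : V) (l : List V) (h : l ≠ []) : l.headD a ∈ l := by
  cases l <;> simp_all

lemma edg_rev (c : Prop) [Decidable c] (l : List V) : edg (rev c l) = edg l := by
  unfold rev; split_ifs <;> simp [edg_reverse]

lemma rev_perm (c : Prop) [Decidable c] (l : List V) : (rev c l).Perm l := by
  unfold rev; split_ifs
  · exact l.reverse_perm
  · exact .refl _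

lemma rev_nil (c : Prop) [Decidable c] : rev c ([] : List V) = [] := by
  unfold rev; split_ifs <;> rfl

lemma headD_rev (a : V) (c : Prop) [Decidable c] (l : List V) :
    (rev c l).headD a = if c then l.getLastD a else l.headD a := by
  unfold rev; split_ifs
  · exact headD_reverse a l
  · rfl

lemma rev_ends (a : V) (c : Prop) [Decidable c] (l : List V) :
    ({(rev c l).getLastD a} : Multiset V) + {(rev c l).headD a} =
      {l.getLastD a} + {l.headD a} := by
  unfold rev; split_ifs
  · rw [headD_reverse, getLastD_reverse, add_comm]
  · rfl

/-- Lovász's edge-addition lemma: if `b` and all neighbours of `a` are path ends, the edge `ab` can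
be added at the cost of moving one path end from `b` to `a`. -/
lemma HasDec.add_edge [DecidableEq V] {E : Finset (Sym2 V)} {f g : V → ℕ} (H : HasDec E f)
    {a b : V} (hab : a ≠ b) (hE : s(a, b) ∉ E) (hf : ∀ v, s(a, v) ∈ E → f v ≠ 0) (hb : f b ≠ 0)
    (hg : ∀ v, g v + (if v = b then 1 else 0) = f v + (if v = a then 1 else 0)) :
    HasDec (insert s(a, b) E) g := by
  classical
  obtain ⟨ι, _, P, hP, hPE, hPf⟩ := H
  choose L R hLR using fun i => exists_split a (P i)
  let arm : ι × Bool → List V := fun x => if x.2 then R x.1 else L x.1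
  let h : ι × Bool → V := fun x => (arm x).headD a
  let t : ι × Bool → V := fun x => (arm x).getLastD a
  let S : Finset (ι × Bool) := univ.filter fun x => arm x ≠ []
  -- The edges of `P i` that no reversal of arms affects.
  let rest : ι → Multiset (Sym2 V) := fun i =>
    edg (L i) + edg (R i) + if a ∈ P i then 0 else edg (P i)
  let F : Set V := {v | ∃ i, a ∉ P i ∧ v ∈ ends (P i)}
  have sum_arm {M : Type} [AddCommMonoid M] (φ : ι × Bool → M) :
      ∑ x, φ x = ∑ i, (φ (i, false) + φ (i, true)) := by
    rw [Fintype.sum_prod_type]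
    exact sum_congr rfl fun i _ => by rw [Fintype.sum_bool, add_comm]
  have sum_link (u : ι × Bool → List V) (hu : ∀ x, u x ≠ [] ↔ arm x ≠ []) :
      ∑ x, link a (u x) = (∑ x ∈ S, ({(u x).headD a} : Multiset V)).map (fun v => s(a, v)) := by
    rw [← Multiset.coe_mapAddMonoidHom, map_sum, sum_filter]
    refine sum_congr rfl fun x _ => ?_
    split_ifs with hx
    · simp [link_eq a _ ((hu x).2 hx)]
    · have : u x = [] := by by_contra h0; exact hx ((hu x).1 h0)
      simp [this, link]
  have hPi (i) : edg (P i) = link a (L i) + link a (R i) + rest i := by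
    rcases hLR i with ⟨h1, h2⟩ | ⟨h1, h2, h3⟩
    · simp only [rest, h1, if_true]
      rw [h2, edg_join, edg_cons, edg_cons]; abel
    · simp [rest, h1, h2, h3, link, edg]
  have hsum : (∑ x ∈ S, ({h x} : Multiset V)).map (fun v => s(a, v)) + ∑ i, rest i = E.val := by
    rw [← hPE, ← sum_link arm (fun _ => Iff.rfl), sum_arm, ← sum_add_distrib]
    exact sum_congr rfl fun i _ => (hPi i).symm
  have hmem (x) (hx : x ∈ S) : s(a, h x) ∈ E := by
    rw [← mem_val, ← hsum, Multiset.mem_add]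
    refine .inl (Multiset.mem_map.2 ⟨_, ?_, rfl⟩)
    rw [Multiset.mem_sum]
    exact ⟨x, hx, by simp⟩
  have hnd : (∑ x ∈ S, ({h x} : Multiset V)).Nodup := by
    have := E.nodup
    rw [← hsum] at this
    exact Multiset.Nodup.of_map _ (Multiset.nodup_of_le (Multiset.le_add_right _ _) this)
  -- Distinct arms use distinct edges at `a`, as every edge is covered once.
  have hinj : Set.InjOn h S := by
    have e : ∑ x ∈ S, ({h x} : Multiset V) = S.val.map h := by
      rw [← Multiset.sum_map_singleton (S.val.map h), Multiset.map_map]; rfl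
    rw [e] at hnd
    exact Multiset.inj_on_of_nodup_map hnd
  have hane (x) (hx : x ∈ S) : h x ≠ a := by
    have h1 : h x ∈ arm x := headD_mem a _ (by simpa [S] using hx)
    intro h2
    rw [h2] at h1
    obtain ⟨i, c⟩ := x
    rcases hLR i with ⟨h3, h4⟩ | ⟨h3, h4, h5⟩
    · have := (hP i).2
      rw [h4] at this
      cases c <;> simp [arm] at h1 <;> simp [List.nodup_append, h1] at this
      exact (this.2.2 a h1).1 rfl
    · cases c <;> simp [arm, h4, h5] at h1
  -- A path end other than `a` is an end of a path avoiding `a` or the free end of an arm.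
  have hfree (v) (hva : v ≠ a) (hv : f v ≠ 0) : v ∈ F ∨ ∃ j ∈ S, t j = v := by
    rw [← hPf, Multiset.count_ne_zero, Multiset.mem_sum] at hv
    obtain ⟨i, -, hi⟩ := hv
    rcases hLR i with ⟨h3, h4⟩ | ⟨h3, h4, h5⟩
    · right
      rw [h4, ends_join] at hi
      simp only [Multiset.mem_add, Multiset.mem_singleton] at hi
      rcases hi with hi | hi
      · refine ⟨(i, false), ?_, hi.symm⟩
        simp only [S, arm, mem_filter_univ]
        rintro h0
        simp_all
      · refine ⟨(i, true), ?_, hi.symm⟩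
        simp only [S, arm, mem_filter_univ]
        rintro h0
        simp_all
    · exact .inl ⟨i, h3, hi⟩
  obtain ⟨T, hT, c, ⟨i0, hai0, hci0⟩, hflip⟩ := flip_chain h t F S b hinj
    (fun x hx e => hE (e ▸ hmem x hx)) (hfree b hab.symm hb)
    (fun x hx => hfree _ (hane x hx) (hf _ (hmem x hx)))
  -- Orient the path avoiding `a` so that it starts at `c`.
  obtain ⟨q, hq, hqc⟩ : ∃ q, (q = P i0 ∨ q = (P i0).reverse) ∧ q.headD a = c := by
    rw [ends_eq a _ (hP i0).1] at hci0
    simp only [Multiset.mem_add, Multiset.mem_singleton] at hci0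
    rcases hci0 with rfl | rfl
    · exact ⟨_, .inl rfl, rfl⟩
    · exact ⟨_, .inr rfl, headD_reverse _ _⟩
  have hqp : q.Perm (P i0) := by
    rcases hq with rfl | rfl
    · exact .refl _
    · exact List.reverse_perm _
  have hqe : edg q = edg (P i0) := by rcases hq with rfl | rfl <;> simp [edg_reverse]
  have hqends : ends q = ends (P i0) := by rcases hq with rfl | rfl <;> simp [ends_reverse]
  have hq0 : q ≠ [] := by rcases hq with rfl | rfl <;> simp [(hP i0).1]
  let arm' : ι × Bool → List V := fun x => rev (x ∈ T) (arm x)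
  have harm' (x) : arm' x ≠ [] ↔ arm x ≠ [] := by
    simp only [arm', ne_eq]
    rw [← List.length_eq_zero_iff, (rev_perm _ _).length_eq, List.length_eq_zero_iff]
  have hflip' : ({c} : Multiset V) + ∑ x ∈ S, {(arm' x).headD a} = {b} + ∑ x ∈ S, {h x} := by
    rw [← hflip]
    congr 1
    exact sum_congr rfl fun x _ => by rw [headD_rev]
  let P' : ι → List V := fun i =>
    if a ∈ P i then (arm' (i, false)).reverse ++ a :: arm' (i, true)
    else if i = i0 then a :: q else P i
  have hE' (i) : edg (P' i) = link a (arm' (i, false)) + link a (arm' (i, true)) + rest i +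
      if i = i0 then {s(a, c)} else 0 := by
    rcases hLR i with ⟨h1, h2⟩ | ⟨h1, h2, h3⟩
    · have hi : i ≠ i0 := by rintro rfl; exact hai0 h1
      simp only [P', rest, h1, hi, if_true, if_false]
      rw [edg_join, edg_cons, edg_cons]
      simp only [arm', edg_rev, arm]
      simp only [if_true, Bool.false_eq_true, if_false]
      abel
    · by_cases hi : i = i0
      · subst hi
        simp only [P', rest, h1, if_true, if_false, arm', arm, h2, h3, ite_self, rev_nil]
        rw [edg_cons, link_eq a q hq0, hqc, hqe]
        simp only [link, edg]
        abel
      · simp [P', rest, h1, hi, arm', arm, h2, h3, rev_nil, link, edg]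
  -- The attached vertices are added on both sides since reversing an arm preserves the sum of its
  -- two ends. Empty arms contribute `a` throughout.
  have hends (i) : ends (P' i) + (if i = i0 then {c} else 0) +
      ({(arm' (i, false)).headD a} + {(arm' (i, true)).headD a}) =
      ends (P i) + (if i = i0 then {a} else 0) + ({h (i, false)} + {h (i, true)}) := by
    rcases hLR i with ⟨h1, h2⟩ | ⟨h1, h2, h3⟩
    · have hi : i ≠ i0 := by rintro rfl; exact hai0 h1
      have e0 : ends (P i) = {t (i, false)} + {t (i, true)} := by
        rw [h2, ends_join]; simp [t, arm]
      simp only [P', h1, hi, if_true, if_false, e0]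
      rw [ends_join]
      have e1 := rev_ends a ((i, false) ∈ T) (arm (i, false))
      have e2 := rev_ends a ((i, true) ∈ T) (arm (i, true))
      have := congr($e1 + $e2)
      simp only [arm', h, t, add_zero]
      rw [add_add_add_comm, this, add_add_add_comm]
    · have e1 (c) : arm (i, c) = [] := by simp [arm, h2, h3]
      have e2 (c) : arm' (i, c) = [] := by simp [arm', e1, rev_nil]
      simp only [h, e1, e2]
      congr 1
      by_cases hi : i = i0
      · subst hi
        simp only [P', h1, if_true, if_false]
        rw [← hqends, ends_eq a (a :: q) (by simp), ends_eq a q hq0, hqc]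
        have : (a :: q).getLastD a = q.getLastD a := by simp [List.getLast?_cons]
        rw [this, List.headD_cons]
        abel
      · simp [P', h1, hi]
  refine ⟨ι, inferInstance, P', ?_, ?_, ?_⟩
  · intro i
    rcases hLR i with ⟨h1, h2⟩ | ⟨h1, h2, h3⟩
    · simp only [P', h1, if_true]
      refine ⟨by simp, ?_⟩
      have hp : ((arm' (i, false)).reverse ++ a :: arm' (i, true)).Perm (P i) := by
        rw [h2]
        exact (((List.reverse_perm _).trans (rev_perm _ _)).trans
          (by simp [arm])).append
          ((rev_perm _ _).cons a)
      exact hp.nodup_iff.2 (hP i).2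
    · by_cases hi : i = i0
      · subst hi
        simp only [P', h1, if_true, if_false]
        refine ⟨by simp, List.nodup_cons.2 ⟨?_, hqp.nodup_iff.2 (hP i).2⟩⟩
        rwa [hqp.mem_iff]
      · simpa [P', h1, hi] using hP i
  · rw [sum_congr rfl fun i _ => hE' i, sum_add_distrib, sum_add_distrib, ← sum_arm
      (fun x => link a (arm' x)), sum_link arm' harm', insert_val_of_notMem hE, ← hsum]
    have := congr(Multiset.map (fun v => s(a, v)) $hflip')
    simp only [Multiset.map_add, Multiset.map_singleton] at this
    rw [sum_ite_eq' univ i0, if_pos (mem_univ _), add_right_comm, add_comm _ {s(a, c)}, this,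
      add_assoc]
    rfl
  · intro v
    have e := sum_congr (rfl : (univ : Finset ι) = univ) fun i _ => hends i
    simp only [sum_add_distrib] at e
    rw [sum_ite_eq' univ i0, sum_ite_eq' univ i0, if_pos (mem_univ _), if_pos (mem_univ _)] at e
    have hsplit (u : ι × Bool → V) :
        ∑ i, ({u (i, false)} : Multiset V) + ∑ i, {u (i, true)} =
        ∑ x ∈ S, {u x} + ∑ x ∈ Sᶜ, {u x} := by
      rw [sum_add_sum_compl, sum_arm, sum_add_distrib]
    rw [hsplit (fun x => (arm' x).headD a), hsplit h] at e
    have hc : ∑ x ∈ Sᶜ, ({(arm' x).headD a} : Multiset V) = ∑ x ∈ Sᶜ, {h x} := by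
      refine sum_congr rfl fun x hx => ?_
      have h1 : arm x = [] := by simpa [S] using hx
      simp [arm', h, h1, rev_nil]
    rw [hc] at e
    have e1 := congr(Multiset.count v $e)
    have e2 := congr(Multiset.count v $hflip')
    simp only [Multiset.count_add, Multiset.count_singleton] at e1 e2
    have := hg v
    have := hPf v
    omega


/-! ### Decompositions with prescribed path ends -/

section Main
variable [DecidableEq V]

/-- The degree of `v` in the graph with edge set `E`, which is loopless in all uses. -/
def deg (E : Finset (Sym2 V)) (v : V) : ℕ := #{e ∈ E | v ∈ e}

lemma deg_erase_mem {E : Finset (Sym2 V)} {e : Sym2 V} (he : e ∈ E) {v : V} (hv : v ∈ e) :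
    deg E v = deg (E.erase e) v + 1 := by
  unfold deg
  rw [filter_erase, card_erase_add_one (by simp [he, hv])]

lemma deg_erase_notMem {E : Finset (Sym2 V)} {e : Sym2 V} {v : V} (hv : v ∉ e) :
    deg (E.erase e) v = deg E v := by
  unfold deg
  rw [filter_erase, erase_eq_of_notMem (by simp [hv])]

lemma deg_ne_zero {E : Finset (Sym2 V)} {v : V} : deg E v ≠ 0 ↔ ∃ x, s(x, v) ∈ E := by
  unfold deg
  rw [card_ne_zero, filter_nonempty_iff]
  constructor
  · rintro ⟨e, he, hv⟩
    obtain ⟨x, rfl⟩ := hv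
    exact ⟨x, by rwa [Sym2.eq_swap]⟩
  · rintro ⟨x, hx⟩
    exact ⟨_, hx, by simp⟩

/-- The prescribed number of path ends: none on `Z`, and elsewhere one at odd vertices and two at
even vertices. -/
def tgt (E : Finset (Sym2 V)) (Z : Finset V) (v : V) : ℕ :=
  if v ∈ Z then 0 else if Even (deg E v) then 2 else 1

/-- `Z` consists of even vertices, at most one of which is not isolated. -/
def Good (E : Finset (Sym2 V)) (Z : Finset V) : Prop :=
  (∀ z ∈ Z, Even (deg E z)) ∧ ∀ z ∈ Z, ∀ z' ∈ Z, deg E z ≠ 0 → deg E z' ≠ 0 → z = z'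

/-- `HasDec.add_edge` for the end counts `tgt`, passing from `Z'` on `E - ab` to `Z` on `E`. -/
lemma step {E : Finset (Sym2 V)} {a b : V} (hab : a ≠ b) (he : s(a, b) ∈ E) {Z Z' : Finset V}
    (H : HasDec (E.erase s(a, b)) (tgt (E.erase s(a, b)) Z')) (hb : b ∉ Z')
    (hZ' : ∀ v ∈ Z', s(a, v) ∉ E)
    (h1 : tgt E Z a = tgt (E.erase s(a, b)) Z' a + 1)
    (h2 : tgt E Z b + 1 = tgt (E.erase s(a, b)) Z' b)
    (h3 : ∀ v, v ≠ a → v ≠ b → (v ∈ Z ↔ v ∈ Z')) : HasDec E (tgt E Z) := by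
  have key (v) (hv : v ∉ Z') : tgt (E.erase s(a, b)) Z' v ≠ 0 := by
    unfold tgt; rw [if_neg hv]; split_ifs <;> simp
  rw [← insert_erase he]
  nth_rewrite 2 [insert_erase he]
  refine H.add_edge hab (by simp) (fun v hv => key v fun hvZ => ?_) (key b hb) ?_
  · exact hZ' v hvZ (mem_of_mem_erase hv)
  · intro v
    by_cases hva : v = a
    · subst hva; simp [hab, h1]
    by_cases hvb : v = b
    · subst hvb; simp [hva, h2]
    · have hv : v ∉ s(a, b) := by simp [hva, hvb]
      simp [hva, hvb, tgt, deg_erase_notMem hv, h3 v hva hvb]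

/-- Induction step when `Z` has a non-isolated vertex `z`. For a neighbour `x` of `z`, the graph
`E - xz` has an end at `z`, and its only possible non-isolated vertex without ends is `x`. -/
lemma case_zero {E : Finset (Sym2 V)} (hE : ∀ e ∈ E, ¬ e.IsDiag)
    (ih : ∀ e ∈ E, ∀ Z, Good (E.erase e) Z → HasDec (E.erase e) (tgt (E.erase e) Z))
    {Z : Finset V} (hZ : Good E Z) {z : V} (hz : z ∈ Z) (hz0 : deg E z ≠ 0) :
    HasDec E (tgt E Z) := by
  obtain ⟨x, hx⟩ := deg_ne_zero.1 hz0
  have hxz : x ≠ z := fun h => hE _ hx (by simp [h])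
  have hx0 : deg E x ≠ 0 := deg_ne_zero.2 ⟨z, by rwa [Sym2.eq_swap]⟩
  have hxZ : x ∉ Z := fun h => hxz (hZ.2 _ h _ hz hx0 hz0)
  have hiso (v) (hv : v ∈ Z) (hvz : v ≠ z) : deg E v = 0 := by
    by_contra h; exact hvz (hZ.2 _ hv _ hz h hz0)
  have hiso' (v) (hv : v ∈ Z) (hvz : v ≠ z) : deg (E.erase s(x, z)) v = 0 := by
    rw [deg_erase_notMem, hiso v hv hvz]
    simp only [Sym2.mem_iff, not_or]
    exact ⟨fun h => hxZ (h ▸ hv), hvz⟩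
  have hadj (v) (hv : v ∈ Z) (hvz : v ≠ z) : s(x, v) ∉ E := fun h =>
    deg_ne_zero.2 ⟨x, h⟩ (hiso v hv hvz)
  have dx := deg_erase_mem hx (v := x) (by simp)
  have dz := deg_erase_mem hx (v := z) (by simp)
  have ez := hZ.1 z hz
  by_cases hxe : Even (deg E x)
  · refine step hxz hx (ih _ hx (Z.erase z) ⟨?_, ?_⟩) (by simp) ?_ ?_ ?_ ?_
    · intro v hv
      simp [hiso' v (mem_of_mem_erase hv) (ne_of_mem_erase hv)]
    · intro v hv _ _ h
      exact absurd (hiso' v (mem_of_mem_erase hv) (ne_of_mem_erase hv)) h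
    · intro v hv
      exact hadj v (mem_of_mem_erase hv) (ne_of_mem_erase hv)
    · simp only [tgt]; grind
    · simp only [tgt]; grind
    · intro v _ h; simp [h]
  · refine step hxz hx (ih _ hx (insert x (Z.erase z)) ⟨?_, ?_⟩) (by simp [hxz.symm]) ?_ ?_ ?_ ?_
    · intro v hv
      rcases mem_insert.1 hv with rfl | hv
      · grind
      simp [hiso' v (mem_of_mem_erase hv) (ne_of_mem_erase hv)]
    · intro v hv w hw h h'
      grind
    · intro v hv
      rcases mem_insert.1 hv with rfl | hv
      · exact fun h => hE _ h (by simp)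
      exact hadj v (mem_of_mem_erase hv) (ne_of_mem_erase hv)
    · simp only [tgt]; grind
    · simp only [tgt]; grind
    · intro v h' h; simp [h, h']

/-- Induction step when `Z` is isolated and `b` is odd. For a neighbour `a` of `b`, the graph
`E - ab` has two ends at `b`, and its only possible non-isolated vertex without ends is `a`. -/
lemma case_odd {E : Finset (Sym2 V)} (hE : ∀ e ∈ E, ¬ e.IsDiag)
    (ih : ∀ e ∈ E, ∀ Z, Good (E.erase e) Z → HasDec (E.erase e) (tgt (E.erase e) Z))
    {Z : Finset V} (hZ : ∀ z ∈ Z, deg E z = 0) {b : V} (hb : ¬ Even (deg E b)) :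
    HasDec E (tgt E Z) := by
  have hb0 : deg E b ≠ 0 := by intro h; simp [h] at hb
  obtain ⟨a, ha⟩ := deg_ne_zero.1 hb0
  have hab : a ≠ b := fun h => hE _ ha (by simp [h])
  have ha0 : deg E a ≠ 0 := deg_ne_zero.2 ⟨b, by rwa [Sym2.eq_swap]⟩
  have haZ : a ∉ Z := fun h => ha0 (hZ _ h)
  have hbZ : b ∉ Z := fun h => hb0 (hZ _ h)
  have hiso (v) (hv : v ∈ Z) : deg (E.erase s(a, b)) v = 0 := by
    rw [deg_erase_notMem, hZ v hv]
    simp only [Sym2.mem_iff, not_or]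
    exact ⟨fun h => haZ (h ▸ hv), fun h => hbZ (h ▸ hv)⟩
  have hadj (v) (hv : v ∈ Z) : s(a, v) ∉ E := fun h => deg_ne_zero.2 ⟨a, h⟩ (hZ v hv)
  have da := deg_erase_mem ha (v := a) (by simp)
  have db := deg_erase_mem ha (v := b) (by simp)
  by_cases hae : Even (deg E a)
  · refine step hab ha (ih _ ha Z ⟨?_, ?_⟩) hbZ hadj ?_ ?_ (fun _ _ _ => Iff.rfl)
    · intro v hv
      simp [hiso v hv]
    · intro v hv _ _ h
      exact absurd (hiso v hv) h
    · simp only [tgt]; grind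
    · simp only [tgt]; grind
  · refine step hab ha (ih _ ha (insert a Z) ⟨?_, ?_⟩) (by simp [hbZ, hab.symm]) ?_ ?_ ?_ ?_
    · intro v hv
      rcases mem_insert.1 hv with rfl | hv
      · grind
      simp [hiso v hv]
    · intro v hv w hw h h'
      grind
    · intro v hv
      rcases mem_insert.1 hv with rfl | hv
      · exact fun h => hE _ h (by simp)
      exact hadj v hv
    · simp only [tgt]; grind
    · simp only [tgt]; grind
    · intro v h' h; simp [h']

lemma HasDec.add_trivial {E : Finset (Sym2 V)} {f g : V → ℕ} (H : HasDec E f) (b : V)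
    (hg : ∀ v, g v = f v + if v = b then 2 else 0) : HasDec E g := by
  obtain ⟨ι, _, P, hP, hE, hf⟩ := H
  refine ⟨Option ι, inferInstance, fun o => o.elim [b] P, ?_, ?_, ?_⟩
  · rintro (_ | i)
    · simp
    · exact hP i
  · simp [Fintype.sum_option, edg, hE]
  · intro v
    rw [hg, ← hf, Fintype.sum_option, Multiset.count_add, add_comm]
    congr 1
    simp only [Option.elim, ends, List.getLastD_nil, Multiset.count_add, Multiset.count_singleton]
    split_ifs <;> rfl

/-- For every good set `Z`, a loopless graph has a path decomposition with end counts `tgt`. -/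
theorem hasDec_tgt [Fintype V] (E : Finset (Sym2 V)) (hE : ∀ e ∈ E, ¬ e.IsDiag) (Z : Finset V)
    (hZ : Good E Z) : HasDec E (tgt E Z) := by
  induction E using Finset.strongInduction generalizing Z with
  | H E ih =>
    replace ih : ∀ e ∈ E, ∀ Z, Good (E.erase e) Z → HasDec (E.erase e) (tgt (E.erase e) Z) :=
      fun e he Z => ih _ (erase_ssubset he) (fun e' he' => hE e' (mem_of_mem_erase he')) Z
    by_cases hA : ∃ z ∈ Z, deg E z ≠ 0
    · obtain ⟨z, hz, hz0⟩ := hA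
      exact case_zero hE ih hZ hz hz0
    push Not at hA
    by_cases hB : ∃ b, ¬ Even (deg E b)
    · obtain ⟨b, hb⟩ := hB
      exact case_odd hE ih hA hb
    push Not at hB
    rcases E.eq_empty_or_nonempty with rfl | ⟨e, he⟩
    · refine ⟨{v // v ∉ Z}, inferInstance, fun v => [v.1], by simp, by simp [edg], fun v => ?_⟩
      simp only [ends, List.getLastD_nil, Multiset.count_sum', Multiset.count_add,
        Multiset.count_singleton, tgt, hB, if_true]
      by_cases hv : v ∈ Z
      · rw [if_pos hv]
        refine sum_eq_zero fun x _ => ?_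
        have : v ≠ x := fun h => x.2 (h ▸ hv)
        simp [this]
      · rw [if_neg hv, Fintype.sum_eq_single ⟨v, hv⟩]
        · simp
        · intro x hx
          have : v ≠ x := fun h => hx (Subtype.ext h.symm)
          simp [this]
    · induction e using Sym2.ind with
      | h a b =>
        have hb0 : deg E b ≠ 0 := deg_ne_zero.2 ⟨a, he⟩
        have hbZ : b ∉ Z := fun h => hb0 (hA b h)
        have H : HasDec E (tgt E (insert b Z)) := by
          refine case_zero hE ih ⟨fun z _ => hB z, ?_⟩ (mem_insert_self b Z) hb0
          grind
        refine H.add_trivial b fun v => ?_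
        by_cases hv : v = b
        · subst hv; simp [tgt, hbZ, hB]
        · simp [tgt, hv]

end Main

/-! ### Cutting paths into short pieces -/

lemma edg_support {G : SimpleGraph V} {u v : V} (w : G.Walk u v) :
    edg w.support = (w.edges : Multiset (Sym2 V)) := by
  induction w with
  | nil => rfl
  | cons h p ih =>
    rw [SimpleGraph.Walk.support_cons, edg_cons, ih, SimpleGraph.Walk.edges_cons]
    cases p <;> simp [link]

lemma isChain_of_edg {G : SimpleGraph V} (p : List V) (h : ∀ e ∈ edg p, e ∈ G.edgeSet) :
    p.IsChain G.Adj := by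
  induction p with
  | nil => simp
  | cons x l ih =>
    cases l with
    | nil => simp
    | cons y l =>
      simp only [edg, Multiset.mem_cons, forall_eq_or_imp] at h
      exact List.isChain_cons_cons.2 ⟨h.1, ih h.2⟩

lemma chop {G : SimpleGraph V} {d : ℕ} (hd : 1 ≤ d) (n : ℕ) {u v : V} (w : G.Walk u v)
    (hn : w.length = n) (hw : w.IsPath) :
    ∃ Ps : List ((u : V) × (v : V) × G.Walk u v),
      (∀ p ∈ Ps, p.2.2.IsPath) ∧ (∀ p ∈ Ps, p.2.2.length ≤ d) ∧
      Ps.flatMap (fun p => p.2.2.edges) = w.edges ∧ Ps.length * d ≤ w.length + d := by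
  induction n using Nat.strong_induction_on generalizing u v with
  | _ n ih =>
    by_cases h : w.length ≤ d
    · exact ⟨[⟨u, v, w⟩], by simpa, by simpa, by simp, by simp⟩
    · obtain ⟨Ps, h1, h2, h3, h4⟩ := ih (w.drop d).length (by simp; omega) (w.drop d) rfl
        (hw.drop d)
      refine ⟨⟨_, _, w.take d⟩ :: Ps, ?_, ?_, ?_, ?_⟩
      · simpa using ⟨hw.take d, h1⟩
      · simp only [List.mem_cons, forall_eq_or_imp]
        exact ⟨by simp, h2⟩
      · rw [List.flatMap_cons, h3]
        simp [← SimpleGraph.Walk.edges_append]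
      · simp only [List.length_cons, add_mul]
        have : (w.drop d).length = w.length - d := by simp
        omega

lemma chop_list {G : SimpleGraph V} {d : ℕ} (hd : 1 ≤ d) (p : List V) (hp : p ≠ [])
    (hnd : p.Nodup) (hG : ∀ e ∈ edg p, e ∈ G.edgeSet) :
    ∃ Ps : List ((u : V) × (v : V) × G.Walk u v),
      (∀ p ∈ Ps, p.2.2.IsPath) ∧ (∀ p ∈ Ps, p.2.2.length ≤ d) ∧
      (Ps.flatMap (fun p => p.2.2.edges) : Multiset (Sym2 V)) = edg p ∧
      Ps.length * d ≤ (edg p).card + d := by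
  let w := SimpleGraph.Walk.ofSupport p hp (isChain_of_edg p hG)
  have hs : w.support = p := SimpleGraph.Walk.support_ofSupport hp _
  obtain ⟨Ps, h1, h2, h3, h4⟩ := chop hd _ w rfl ((SimpleGraph.Walk.isPath_def _).2 (by rwa [hs]))
  have he := edg_support w
  rw [hs] at he
  refine ⟨Ps, h1, h2, by rw [h3, he], ?_⟩
  rw [he, Multiset.coe_card, SimpleGraph.Walk.length_edges]
  exact h4

/-- If each vertex is at most twice a path end, there are at most `n` paths. -/
lemma card_le [Fintype V] [DecidableEq V] {ι : Type} [Fintype ι] (P : ι → List V)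
    (hP : ∀ i, P i ≠ []) (h : ∀ v, (∑ i, ends (P i)).count v ≤ 2) :
    Fintype.card ι ≤ Fintype.card V := by
  have h1 : (∑ i, ends (P i)).card = 2 * Fintype.card ι := by
    rw [Multiset.card_sum, sum_congr rfl (g := fun _ => 2)]
    · simp [mul_comm]
    · intro i _
      have := hP i
      cases hh : P i with
      | nil => exact absurd hh this
      | cons x l => simp [ends]
  have h2 : (∑ i, ends (P i)).card ≤ 2 * Fintype.card V := by
    rw [← Multiset.sum_count_eq_card (s := univ) (fun _ _ => mem_univ _)]
    refine (sum_le_sum fun v _ => h v).trans ?_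
    simp [mul_comm]
  omega

end ShortPaths

/-- Every graph `G` on `n` vertices can be decomposed into at most `e(G)/d + n`
pairwise edge-disjoint paths, each of length at most `d`. -/
theorem decompose_into_short_paths (V : Type) [Fintype V] (G : SimpleGraph V)
    (d : ℕ) (hd : 1 ≤ d) :
    ∃ Ps : List ((u : V) × (v : V) × G.Walk u v),
      (∀ p ∈ Ps, p.2.2.IsPath) ∧
      (∀ p ∈ Ps, p.2.2.length ≤ d) ∧
      Ps.Pairwise (fun p q => ∀ e, e ∈ p.2.2.edges → e ∉ q.2.2.edges) ∧
      (∀ e, e ∈ G.edgeSet ↔ ∃ p ∈ Ps, e ∈ p.2.2.edges) ∧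
      ((Ps.length : ℝ) ≤ (G.edgeSet.ncard : ℝ) / d + Fintype.card V) := by
  classical
  obtain ⟨ι, _, P, hP, hPE, hPf⟩ := ShortPaths.hasDec_tgt G.edgeFinset
    (fun e he => G.not_isDiag_of_mem_edgeFinset he) ∅ ⟨by simp, by simp⟩
  have hcard : Fintype.card ι ≤ Fintype.card V := by
    refine ShortPaths.card_le P (fun i => (hP i).1) fun v => ?_
    rw [hPf]; unfold ShortPaths.tgt; split_ifs <;> simp
  have hsub (i) : ∀ e ∈ ShortPaths.edg (P i), e ∈ G.edgeSet := by
    intro e he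
    rw [← SimpleGraph.mem_edgeFinset, ← Finset.mem_val, ← hPE, Multiset.mem_sum]
    exact ⟨i, Finset.mem_univ _, he⟩
  choose L h1 h2 h3 h4 using fun i => ShortPaths.chop_list hd (P i) (hP i).1 (hP i).2 (hsub i)
  let Ps := (Finset.univ : Finset ι).toList.flatMap L
  have hedges : (Ps.flatMap (fun p => p.2.2.edges) : Multiset (Sym2 V)) = G.edgeFinset.val := by
    rw [← hPE]
    simp only [Ps, List.flatMap_assoc]
    rw [← Multiset.coe_bind, Finset.coe_toList]
    exact congrArg Multiset.sum (Multiset.map_congr rfl fun i _ => h3 i)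
  have hlen : Ps.length * d ≤ G.edgeSet.ncard + Fintype.card V * d := by
    have e1 : Ps.length = ∑ i, (L i).length := by
      simp [Ps, List.length_flatMap]
    have e2 : G.edgeSet.ncard = ∑ i, (ShortPaths.edg (P i)).card := by
      rw [← Multiset.card_sum, hPE, ← SimpleGraph.coe_edgeFinset, Set.ncard_coe_finset]; rfl
    rw [e1, e2, Finset.sum_mul]
    calc _ ≤ ∑ i, ((ShortPaths.edg (P i)).card + d) := Finset.sum_le_sum fun i _ => h4 i
      _ = ∑ i, (ShortPaths.edg (P i)).card + Fintype.card ι * d := by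
        rw [Finset.sum_add_distrib]; simp
      _ ≤ _ := by gcongr
  refine ⟨Ps, ?_, ?_, ?_, ?_, ?_⟩
  · intro p hp
    obtain ⟨i, -, hi⟩ := List.mem_flatMap.1 hp
    exact h1 i p hi
  · intro p hp
    obtain ⟨i, -, hi⟩ := List.mem_flatMap.1 hp
    exact h2 i p hi
  · have : (Ps.flatMap fun p => p.2.2.edges).Nodup := by
      rw [← Multiset.coe_nodup, hedges]
      exact G.edgeFinset.nodup
    exact (List.nodup_flatMap.1 this).2.imp fun h e he he' => h he he'
  · intro e
    rw [← SimpleGraph.mem_edgeFinset, ← Finset.mem_val, ← hedges, Multiset.mem_coe,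
      List.mem_flatMap]
  · have hd' : (0 : ℝ) < d := by exact_mod_cast hd
    rw [← mul_le_mul_iff_left₀ hd', add_mul, div_mul_cancel₀ _ hd'.ne']
    exact_mod_cast hlen
end

section
/- For every graph G on n ≥ 2 vertices, there is a subgraph G₁ ⊆ G with e(G₁) ≤ n·(log n)^55 and a collection 𝒫 of at most 1300n paths in G such that 𝒫 strongly separates the set of edges of G that are not edges of G₁. -/
/-!
The subgraph `G₁` can be taken empty: all edges of `G` are strongly separated by `44 n` paths, by
combining Pósa rotations with zigzag paths.

*Reduction to one path.* On a longest path `P` of the subgraph induced on a vertex set `U`, let `S`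
be the set of all endpoints reachable by Pósa rotations that keep the last vertex fixed. Every
neighbour in `U` of a vertex of `S` lies on `P`, and is in `S`, or next to a vertex of `S` on `P`,
or the last vertex of `P`. So all edges of `G[U]` touching `S` join vertices of a set `T` of at most
`4|S|` positions of `P` (`exists_closed_set_on_path`). If the edges inside `T` can be separated by
`11|T|` paths, then deleting `S` from `U` and inducting gives `44 n` paths in total
(`exists_strong_sep`).

*Separating the edges inside `T`.* Let `r x` be the rank of the position `x` in `T`. For `c = 1, 2`,
the edges joining positions `x < y` with a given value of `r x + c * r y` form a nested matching:
as `x` increases, `y` decreases. A nested matching is covered by two zigzag paths (snakes), which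
alternate between matching edges and segments of `P` and use no common edge of `P`
(`exists_snakes`). An edge of `P` is missed by one of the two snakes through a given edge `xy`; an
edge not on `P` that lies in the snakes of `xy` for both `c = 1` and `c = 2` has the same
`r x + r y` and `r x + 2 * r y`, hence is `xy` itself. The edges joining consecutive positions are
taken as paths of length one (`exists_sep_on_path`).
-/

/-! ### Snakes covering a nested matching -/

/-- The walk `W` is a snake on the interval `[lo, hi]` of positions of the path `p 0, p 1, …`, for
the matching whose edges are the pairs `p x, p y` with `M x y`: it is a path inside the interval,
contains all matching edges inside the interval, and its other edges are edges of the path `p`. -/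
structure IsSnake {V : Type} {G : SimpleGraph V} (p : ℕ → V) (M : ℕ → ℕ → Prop) (lo hi : ℕ)
    {a b : V} (W : G.Walk a b) : Prop where
  isPath : W.IsPath
  support : ∀ v ∈ W.support, ∃ i, lo ≤ i ∧ i ≤ hi ∧ v = p i
  covers : ∀ x y, M x y → lo ≤ x → y ≤ hi → s(p x, p y) ∈ W.edges
  edges : ∀ e ∈ W.edges, (∃ c, lo ≤ c ∧ c < hi ∧ e = s(p c, p (c + 1))) ∨
    ∃ x y, M x y ∧ e = s(p x, p y)

/-- For a nested matching `M` there are a snake starting at `lo` and a snake starting at `hi` that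
share no edge of the path `p`. The induction shrinks the interval: when `lo` and `hi` are matched,
each snake crosses the pair and then steps inwards at its far end; otherwise one of `lo`, `hi` is
unmatched inside the interval, and only the snake starting there has to step inwards. -/
theorem exists_snakes {V : Type} {G : SimpleGraph V} (p : ℕ → V) (N : ℕ)
    (hinj : ∀ i j, i ≤ N → j ≤ N → p i = p j → i = j)
    (hadj : ∀ i, i < N → G.Adj (p i) (p (i + 1)))
    (M : ℕ → ℕ → Prop) (hM : ∀ x y, M x y → x + 2 ≤ y ∧ G.Adj (p x) (p y))
    (nest : ∀ x y x' y', M x y → M x' y' → (x < x' ↔ y' < y)) :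
    ∀ d lo hi, hi = lo + d → hi ≤ N → ∃ (a b : V) (A : G.Walk (p lo) a) (B : G.Walk (p hi) b),
      IsSnake p M lo hi A ∧ IsSnake p M lo hi B ∧
      ∀ c, lo ≤ c → c < hi →
        ¬ (s(p c, p (c + 1)) ∈ A.edges ∧ s(p c, p (c + 1)) ∈ B.edges) := by
  intro d
  induction d using Nat.strong_induction_on with
  | _ d ih =>
  intro lo hi hd hN
  have notin : ∀ {l h : ℕ} {a b : V} {W : G.Walk a b}, IsSnake p M l h W → h ≤ N →
      ∀ i, i ≤ N → (i < l ∨ h < i) → p i ∉ W.support := by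
    intro l h a b W hW hh i hi hlt hmem
    obtain ⟨j, h1, h2, h3⟩ := hW.support _ hmem
    have := hinj i j hi (h2.trans hh) h3
    omega
  rcases Nat.eq_zero_or_pos d with rfl | hdpos
  · obtain rfl : hi = lo := by omega
    refine ⟨_, _, .nil, .nil, ?_, ?_, by omega⟩ <;>
    · refine ⟨by simp, fun v hv => ⟨hi, le_rfl, le_rfl, by simpa using hv⟩, ?_, by simp⟩
      intro x y h h1 h2
      have := hM x y h
      omega
  by_cases hlohi : M lo hi
  · have hge := (hM _ _ hlohi).1
    obtain ⟨a, b, A, B, hA, hB, hAB⟩ := ih (d - 2) (by omega) (lo + 1) (hi - 1) (by omega) (by omega)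
    have hM' : ∀ x y, M x y → lo ≤ x → y ≤ hi → (x = lo ∧ y = hi) ∨ (lo + 1 ≤ x ∧ y ≤ hi - 1) := by
      intro x y h h1 h2
      have := nest _ _ _ _ h hlohi
      have := nest _ _ _ _ hlohi h
      omega
    have adj1 : G.Adj (p hi) (p (hi - 1)) := by
      have := hadj (hi - 1) (by omega)
      rw [Nat.sub_add_cancel (by omega)] at this
      exact this.symm
    have adj2 := hadj lo (by omega)
    have adj3 := (hM _ _ hlohi).2
    have e1 : s(p hi, p (hi - 1)) = s(p (hi - 1), p (hi - 1 + 1)) := by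
      rw [Nat.sub_add_cancel (by omega)]; exact Sym2.eq_swap
    have a1 := notin hA (by omega) lo (by omega) (by omega)
    have a2 := notin hA (by omega) hi (by omega) (by omega)
    have b1 := notin hB (by omega) lo (by omega) (by omega)
    have b2 := notin hB (by omega) hi (by omega) (by omega)
    refine ⟨_, _, .cons adj3 (.cons adj1 B), .cons adj3.symm (.cons adj2 A), ?_, ?_, ?_⟩
    · refine ⟨?_, ?_, ?_, ?_⟩
      · simp only [SimpleGraph.Walk.cons_isPath_iff, SimpleGraph.Walk.support_cons, List.mem_cons,
          not_or]
        exact ⟨⟨hB.isPath, b2⟩, adj3.ne, b1⟩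
      · simp only [SimpleGraph.Walk.support_cons, List.mem_cons]
        rintro v (rfl | rfl | h)
        · exact ⟨lo, by omega, by omega, rfl⟩
        · exact ⟨hi, by omega, by omega, rfl⟩
        · obtain ⟨i, h1, h2, h3⟩ := hB.support v h
          exact ⟨i, by omega, by omega, h3⟩
      · intro x y h h1 h2
        simp only [SimpleGraph.Walk.edges_cons, List.mem_cons]
        rcases hM' x y h h1 h2 with ⟨rfl, rfl⟩ | ⟨h3, h4⟩
        · exact .inl rfl
        · exact .inr (.inr (hB.covers x y h h3 h4))
      · simp only [SimpleGraph.Walk.edges_cons, List.mem_cons]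
        rintro e (rfl | rfl | h)
        · exact .inr ⟨lo, hi, hlohi, rfl⟩
        · exact .inl ⟨hi - 1, by omega, by omega, e1⟩
        · rcases hB.edges e h with ⟨c, h1, h2, h3⟩ | h
          · exact .inl ⟨c, by omega, by omega, h3⟩
          · exact .inr h
    · refine ⟨?_, ?_, ?_, ?_⟩
      · simp only [SimpleGraph.Walk.cons_isPath_iff, SimpleGraph.Walk.support_cons, List.mem_cons,
          not_or]
        exact ⟨⟨hA.isPath, a1⟩, adj3.ne', a2⟩
      · simp only [SimpleGraph.Walk.support_cons, List.mem_cons]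
        rintro v (rfl | rfl | h)
        · exact ⟨hi, by omega, by omega, rfl⟩
        · exact ⟨lo, by omega, by omega, rfl⟩
        · obtain ⟨i, h1, h2, h3⟩ := hA.support v h
          exact ⟨i, by omega, by omega, h3⟩
      · intro x y h h1 h2
        simp only [SimpleGraph.Walk.edges_cons, List.mem_cons]
        rcases hM' x y h h1 h2 with ⟨rfl, rfl⟩ | ⟨h3, h4⟩
        · exact .inl Sym2.eq_swap
        · exact .inr (.inr (hA.covers x y h h3 h4))
      · simp only [SimpleGraph.Walk.edges_cons, List.mem_cons]
        rintro e (rfl | rfl | h)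
        · exact .inr ⟨lo, hi, hlohi, Sym2.eq_swap⟩
        · exact .inl ⟨lo, by omega, by omega, rfl⟩
        · rcases hA.edges e h with ⟨c, h1, h2, h3⟩ | h
          · exact .inl ⟨c, by omega, by omega, h3⟩
          · exact .inr h
    · rintro c hc1 hc2 ⟨h1, h2⟩
      simp only [SimpleGraph.Walk.edges_cons, List.mem_cons, Sym2.eq_iff] at h1 h2
      have j := fun i hi => hinj c i (by omega) hi
      have j' := fun i hi => hinj (c + 1) i (by omega) hi
      have j1 := j lo (by omega)
      have j2 := j hi (by omega)
      have j3 := j (hi - 1) (by omega)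
      have j4 := j (lo + 1) (by omega)
      have k1 := j' lo (by omega)
      have k2 := j' hi (by omega)
      have k3 := j' (hi - 1) (by omega)
      have k4 := j' (lo + 1) (by omega)
      by_cases hclo : c = lo
      · subst hclo
        have : s(p c, p (c + 1)) ∉ B.edges := fun h => b1 (B.fst_mem_support_of_mem_edges h)
        grind
      by_cases hchi : c + 1 = hi
      · subst hchi
        have : s(p c, p (c + 1)) ∉ A.edges := fun h => a2 (A.snd_mem_support_of_mem_edges h)
        grind
      have := hAB c (by omega) (by omega)
      grind
  by_cases hlo : ∃ y, y ≤ hi ∧ M lo y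
  · -- the pair at `lo` excludes, by nesting, every pair at `hi`
    obtain ⟨y, hy, hly⟩ := hlo
    have hyne : y ≠ hi := fun h => hlohi (h ▸ hly)
    have hM' : ∀ x y, M x y → lo ≤ x → y ≤ hi → y ≤ hi - 1 := by
      intro x z h h1 h2
      have := nest _ _ _ _ h hly
      have := nest _ _ _ _ hly h
      by_contra hc
      obtain rfl : z = hi := by omega
      obtain rfl : x = lo := by omega
      exact hlohi h
    obtain ⟨a, b, A, B, hA, hB, hAB⟩ := ih (d - 1) (by omega) lo (hi - 1) (by omega) (by omega)
    have adj1 : G.Adj (p hi) (p (hi - 1)) := by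
      have := hadj (hi - 1) (by omega)
      rw [Nat.sub_add_cancel (by omega)] at this
      exact this.symm
    have e1 : s(p hi, p (hi - 1)) = s(p (hi - 1), p (hi - 1 + 1)) := by
      rw [Nat.sub_add_cancel (by omega)]; exact Sym2.eq_swap
    have a2 := notin hA (by omega) hi (by omega) (by omega)
    have b2 := notin hB (by omega) hi (by omega) (by omega)
    refine ⟨_, _, A, .cons adj1 B, ?_, ?_, ?_⟩
    · refine ⟨hA.isPath, fun v hv => ?_, fun x y h h1 h2 => hA.covers x y h h1 (hM' x y h h1 h2),
        fun e he => ?_⟩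
      · obtain ⟨i, h1, h2, h3⟩ := hA.support v hv
        exact ⟨i, by omega, by omega, h3⟩
      · rcases hA.edges e he with ⟨c, h1, h2, h3⟩ | h
        · exact .inl ⟨c, by omega, by omega, h3⟩
        · exact .inr h
    · refine ⟨?_, ?_, ?_, ?_⟩
      · simp only [SimpleGraph.Walk.cons_isPath_iff]
        exact ⟨hB.isPath, b2⟩
      · simp only [SimpleGraph.Walk.support_cons, List.mem_cons]
        rintro v (rfl | h)
        · exact ⟨hi, by omega, by omega, rfl⟩
        · obtain ⟨i, h1, h2, h3⟩ := hB.support v h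
          exact ⟨i, by omega, by omega, h3⟩
      · intro x y h h1 h2
        simp only [SimpleGraph.Walk.edges_cons, List.mem_cons]
        exact .inr (hB.covers x y h h1 (hM' x y h h1 h2))
      · simp only [SimpleGraph.Walk.edges_cons, List.mem_cons]
        rintro e (rfl | h)
        · exact .inl ⟨hi - 1, by omega, by omega, e1⟩
        · rcases hB.edges e h with ⟨c, h1, h2, h3⟩ | h
          · exact .inl ⟨c, by omega, by omega, h3⟩
          · exact .inr h
    · rintro c hc1 hc2 ⟨h1, h2⟩
      by_cases hchi : c + 1 = hi
      · subst hchi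
        exact a2 (A.snd_mem_support_of_mem_edges h1)
      simp only [SimpleGraph.Walk.edges_cons, List.mem_cons, Sym2.eq_iff] at h2
      have j2 := hinj c hi (by omega) (by omega)
      have k2 := hinj (c + 1) hi (by omega) (by omega)
      have := hAB c (by omega) (by omega)
      grind
  · have hM' : ∀ x y, M x y → lo ≤ x → y ≤ hi → lo + 1 ≤ x := by
      intro x z h h1 h2
      by_contra hc
      obtain rfl : x = lo := by omega
      exact hlo ⟨z, h2, h⟩
    obtain ⟨a, b, A, B, hA, hB, hAB⟩ := ih (d - 1) (by omega) (lo + 1) hi (by omega) (by omega)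
    have adj1 := hadj lo (by omega)
    have a2 := notin hA (by omega) lo (by omega) (by omega)
    have b2 := notin hB (by omega) lo (by omega) (by omega)
    refine ⟨_, _, .cons adj1 A, B, ?_, ?_, ?_⟩
    · refine ⟨?_, ?_, ?_, ?_⟩
      · simp only [SimpleGraph.Walk.cons_isPath_iff]
        exact ⟨hA.isPath, a2⟩
      · simp only [SimpleGraph.Walk.support_cons, List.mem_cons]
        rintro v (rfl | h)
        · exact ⟨lo, by omega, by omega, rfl⟩
        · obtain ⟨i, h1, h2, h3⟩ := hA.support v h
          exact ⟨i, by omega, by omega, h3⟩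
      · intro x y h h1 h2
        simp only [SimpleGraph.Walk.edges_cons, List.mem_cons]
        exact .inr (hA.covers x y h (hM' x y h h1 h2) h2)
      · simp only [SimpleGraph.Walk.edges_cons, List.mem_cons]
        rintro e (rfl | h)
        · exact .inl ⟨lo, by omega, by omega, rfl⟩
        · rcases hA.edges e h with ⟨c, h1, h2, h3⟩ | h
          · exact .inl ⟨c, by omega, by omega, h3⟩
          · exact .inr h
    · refine ⟨hB.isPath, fun v hv => ?_, fun x y h h1 h2 => hB.covers x y h (hM' x y h h1 h2) h2,
        fun e he => ?_⟩
      · obtain ⟨i, h1, h2, h3⟩ := hB.support v hv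
        exact ⟨i, by omega, by omega, h3⟩
      · rcases hB.edges e he with ⟨c, h1, h2, h3⟩ | h
        · exact .inl ⟨c, by omega, by omega, h3⟩
        · exact .inr h
    · rintro c hc1 hc2 ⟨h1, h2⟩
      by_cases hclo : c = lo
      · subst hclo
        exact b2 (B.fst_mem_support_of_mem_edges h2)
      simp only [SimpleGraph.Walk.edges_cons, List.mem_cons, Sym2.eq_iff] at h1
      have j2 := hinj c lo (by omega) (by omega)
      have k2 := hinj (c + 1) lo (by omega) (by omega)
      have := hAB c (by omega) (by omega)
      grind

/-! ### Separating the edges between positions of a path -/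

/-- Here `f` ranges over all unordered pairs, including the diagonal ones, so the conclusion also
says that every edge inside `T` is covered by one of the paths. -/
theorem exists_sep_on_path {V : Type} {G : SimpleGraph V} (p : ℕ → V) (N : ℕ)
    (hinj : ∀ i j, i ≤ N → j ≤ N → p i = p j → i = j)
    (hadj : ∀ i, i < N → G.Adj (p i) (p (i + 1)))
    (T : Finset ℕ) (hT : ∀ i ∈ T, i ≤ N) :
    ∃ Ps : List ((u : V) × (v : V) × G.Walk u v),
      (∀ q ∈ Ps, q.2.2.IsPath) ∧ Ps.length ≤ 11 * T.card ∧
      ∀ x ∈ T, ∀ y ∈ T, G.Adj (p x) (p y) → ∀ f, f ≠ s(p x, p y) →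
        ∃ q ∈ Ps, s(p x, p y) ∈ q.2.2.edges ∧ f ∉ q.2.2.edges := by
  classical
  -- the rank of a position in `T`
  let r : ℕ → ℕ := fun x => (T.filter (· < x)).card
  have rmono : ∀ x y, x ≤ y → r x ≤ r y := fun x y h =>
    Finset.card_le_card fun z hz => by
      simp only [Finset.mem_filter] at hz ⊢; exact ⟨hz.1, by omega⟩
  have rlt : ∀ x ∈ T, ∀ y, x < y → r x < r y := fun x hx y h =>
    Finset.card_lt_card <| (Finset.ssubset_iff_of_subset fun z hz => by
      simp only [Finset.mem_filter] at hz ⊢; exact ⟨hz.1, by omega⟩).2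
        ⟨x, by simp [hx, h], by simp⟩
  have rbound : ∀ x ∈ T, r x < T.card := fun x hx =>
    Finset.card_lt_card <| (Finset.ssubset_iff_of_subset (Finset.filter_subset _ _)).2
      ⟨x, hx, by simp⟩
  let M : ℕ → ℕ → ℕ → ℕ → Prop := fun c k x y =>
    x ∈ T ∧ y ∈ T ∧ x + 2 ≤ y ∧ G.Adj (p x) (p y) ∧ r x + c * r y = k
  -- the two snakes of each class
  have key : ∀ c k : ℕ, ∃ A B : (u : V) × (v : V) × G.Walk u v,
      0 < c → IsSnake p (M c k) 0 N A.2.2 ∧ IsSnake p (M c k) 0 N B.2.2 ∧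
        ∀ i, 0 ≤ i → i < N →
          ¬ (s(p i, p (i + 1)) ∈ A.2.2.edges ∧ s(p i, p (i + 1)) ∈ B.2.2.edges) := by
    intro c k
    rcases Nat.eq_zero_or_pos c with rfl | hc
    · exact ⟨⟨p 0, p 0, .nil⟩, ⟨p 0, p 0, .nil⟩, fun h => absurd h (lt_irrefl 0)⟩
    obtain ⟨a, b, A, B, h⟩ := exists_snakes p N hinj hadj (M c k)
      (fun x y h => ⟨h.2.2.1, h.2.2.2.1⟩) (by
        rintro x y x' y' ⟨hx, hy, -, -, h⟩ ⟨hx', hy', -, -, h'⟩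
        constructor
        · intro hlt
          by_contra hcon
          have h1 := rlt x hx x' hlt
          have h2 := Nat.mul_le_mul_left c (rmono y y' (by omega))
          omega
        · intro hlt
          by_contra hcon
          have h1 := Nat.mul_lt_mul_of_pos_left (rlt y' hy' y hlt) hc
          have h2 := rmono x' x (by omega)
          omega) N 0 N (by omega) le_rfl
    exact ⟨⟨_, _, A⟩, ⟨_, _, B⟩, fun _ => h⟩
  choose A B hAB using key
  let single : ℕ → (u : V) × (v : V) × G.Walk u v := fun x =>
    if h : x < N then ⟨p x, p (x + 1), (hadj x h).toWalk⟩ else ⟨p x, p x, .nil⟩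
  have single_pos : ∀ x (h : x < N), single x = ⟨p x, p (x + 1), (hadj x h).toWalk⟩ :=
    fun x h => dif_pos h
  have single_neg : ∀ x, ¬ x < N → single x = ⟨p x, p x, .nil⟩ := fun x h => dif_neg h
  let Ps := ((List.range (2 * T.card)).map (A 1) ++ (List.range (2 * T.card)).map (B 1)) ++
    ((List.range (3 * T.card)).map (A 2) ++ (List.range (3 * T.card)).map (B 2)) ++
    T.toList.map single
  have hmemP : ∀ q, q ∈ Ps ↔
      ((∃ k, k < 2 * T.card ∧ A 1 k = q) ∨ ∃ k, k < 2 * T.card ∧ B 1 k = q) ∨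
      ((∃ k, k < 3 * T.card ∧ A 2 k = q) ∨ ∃ k, k < 3 * T.card ∧ B 2 k = q) ∨
      ∃ x ∈ T, single x = q := by
    intro q
    simp [Ps, or_assoc]
  refine ⟨Ps, ?_, ?_, ?_⟩
  · intro q hq
    rw [hmemP] at hq
    rcases hq with (⟨k, -, rfl⟩ | ⟨k, -, rfl⟩) | (⟨k, -, rfl⟩ | ⟨k, -, rfl⟩) | ⟨x, -, rfl⟩
    · exact (hAB 1 k (by omega)).1.isPath
    · exact (hAB 1 k (by omega)).2.1.isPath
    · exact (hAB 2 k (by omega)).1.isPath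
    · exact (hAB 2 k (by omega)).2.1.isPath
    · by_cases h : x < N
      · rw [single_pos x h]
        simpa using (hadj x h).ne
      · rw [single_neg x h]
        exact .nil
  · simp [Ps]
    omega
  -- it suffices to treat edges written with increasing positions
  suffices hmain : ∀ x ∈ T, ∀ y ∈ T, x < y → G.Adj (p x) (p y) → ∀ f, f ≠ s(p x, p y) →
        ∃ q ∈ Ps, s(p x, p y) ∈ q.2.2.edges ∧ f ∉ q.2.2.edges by
    intro x hx y hy hxy f hf
    rcases lt_trichotomy x y with h | rfl | h
    · exact hmain x hx y hy h hxy f hf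
    · exact absurd hxy (G.irrefl)
    · rw [Sym2.eq_swap] at hf ⊢
      exact hmain y hy x hx h hxy.symm f hf
  intro x hx y hy hlt hxy f hf
  by_cases hy1 : y = x + 1
  · subst hy1
    have hxN : x < N := hT _ hy
    refine ⟨single x, (hmemP _).2 (.inr (.inr ⟨x, hx, rfl⟩)), ?_⟩
    rw [single_pos x hxN]
    simpa using hf
  have hrx := rbound x hx
  have hry := rbound y hy
  have hmemM : ∀ c, M c (r x + c * r y) x y := fun c => ⟨hx, hy, by omega, hxy, rfl⟩
  have hA : ∀ c, 0 < c → s(p x, p y) ∈ (A c (r x + c * r y)).2.2.edges := fun c hc =>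
    (hAB c _ hc).1.covers x y (hmemM c) (Nat.zero_le _) (hT _ hy)
  have hB : ∀ c, 0 < c → s(p x, p y) ∈ (B c (r x + c * r y)).2.2.edges := fun c hc =>
    (hAB c _ hc).2.1.covers x y (hmemM c) (Nat.zero_le _) (hT _ hy)
  have mA1 : A 1 (r x + 1 * r y) ∈ Ps := (hmemP _).2 (.inl (.inl ⟨_, by omega, rfl⟩))
  have mB1 : B 1 (r x + 1 * r y) ∈ Ps := (hmemP _).2 (.inl (.inr ⟨_, by omega, rfl⟩))
  have mA2 : A 2 (r x + 2 * r y) ∈ Ps := (hmemP _).2 (.inr (.inl (.inl ⟨_, by omega, rfl⟩)))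
  by_contra! hcon
  have f1 := hcon _ mA1 (hA 1 (by omega))
  have f2 := hcon _ mB1 (hB 1 (by omega))
  have f3 := hcon _ mA2 (hA 2 (by omega))
  have hnot : ¬ ∃ c, 0 ≤ c ∧ c < N ∧ f = s(p c, p (c + 1)) := by
    rintro ⟨c, h0, hc, rfl⟩
    exact (hAB 1 _ (by omega)).2.2 c h0 hc ⟨f1, f2⟩
  obtain ⟨x₁, y₁, ⟨hx₁, hy₁, hl₁, -, hk₁⟩, he₁⟩ :=
    ((hAB 1 _ (by omega)).1.edges f f1).resolve_left hnot
  obtain ⟨x₂, y₂, ⟨hx₂, hy₂, hl₂, -, hk₂⟩, he₂⟩ :=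
    ((hAB 2 _ (by omega)).1.edges f f3).resolve_left hnot
  have hpair : x₁ = x₂ ∧ y₁ = y₂ := by
    rw [he₁, Sym2.eq_iff] at he₂
    have bx₁ := hT _ hx₁
    have by₁ := hT _ hy₁
    have bx₂ := hT _ hx₂
    have by₂ := hT _ hy₂
    rcases he₂ with ⟨h, h'⟩ | ⟨h, h'⟩
    · exact ⟨hinj _ _ bx₁ bx₂ h, hinj _ _ by₁ by₂ h'⟩
    · have := hinj _ _ bx₁ by₂ h
      have := hinj _ _ by₁ bx₂ h'
      omega
  obtain ⟨rfl, rfl⟩ := hpair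
  have rinj : ∀ a ∈ T, ∀ b ∈ T, r a = r b → a = b := by
    intro a ha b hb h
    rcases lt_trichotomy a b with h' | h' | h'
    · have := rlt a ha b h'; omega
    · exact h'
    · have := rlt b hb a h'; omega
  obtain rfl := rinj x₁ hx₁ x hx (by omega)
  obtain rfl := rinj y₁ hy₁ y hy (by omega)
  exact hf he₁

/-! ### Pósa rotations -/

/-- `a` is immediately followed by `b` in the list `L`. -/
def Consec {α : Type} (L : List α) (a b : α) : Prop :=
  ∃ i, L[i]? = some a ∧ L[i + 1]? = some b

/-- A Pósa rotation of a path, given as the list `L` of its vertices, at its first vertex `v`: the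
edge `vw` is added and the edge of `L` entering `w` is dropped. The last vertex is kept. -/
def Rot {V : Type} (G : SimpleGraph V) (L L' : List V) : Prop :=
  ∃ v B w A, L = v :: B ++ w :: A ∧ G.Adj v w ∧ L' = (v :: B).reverse ++ w :: A

theorem Rot.perm {V : Type} {G : SimpleGraph V} {L L' : List V} (h : Rot G L L') :
    L'.Perm L := by
  obtain ⟨v, B, w, A, rfl, -, rfl⟩ := h
  exact (List.reverse_perm _).append_right _

theorem Rot.isChain {V : Type} {G : SimpleGraph V} {L L' : List V} (h : Rot G L L')
    (hL : L.IsChain G.Adj) : L'.IsChain G.Adj := by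
  obtain ⟨v, B, w, A, rfl, hvw, rfl⟩ := h
  rw [List.isChain_append] at hL ⊢
  refine ⟨?_, hL.2.1, ?_⟩
  · rw [List.isChain_reverse]
    exact hL.1.imp fun _ _ h => h.symm
  · intro x hx y hy
    simp at hx hy
    subst hx hy
    exact hvw

/-- The only edge destroyed by a rotation is one whose first vertex becomes the new endpoint. -/
theorem Rot.consec {V : Type} {G : SimpleGraph V} {L L' : List V} (h : Rot G L L')
    {a b : V} (hab : Consec L a b) : L'.head? = some a ∨ Consec L' a b ∨ Consec L' b a := by
  obtain ⟨v, B, w, A, rfl, -, rfl⟩ := h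
  obtain ⟨i, h1, h2⟩ := hab
  generalize v :: B = B at *
  rcases lt_trichotomy (i + 1) B.length with h | h | h
  · refine .inr (.inr ⟨B.length - 2 - i, ?_, ?_⟩)
    · grind
    · grind
  · left
    rw [List.getElem?_append_left (by omega)] at h1
    rw [List.head?_append, List.head?_reverse, List.getLast?_eq_getElem?, ← h]
    simp [h1]
  · refine .inr (.inl ⟨i, ?_, ?_⟩)
    · grind
    · grind

/-- Pósa's lemma: `S` is the set of endpoints obtained from a longest path in `U` by rotations, and
`T` is the set of positions on that path of the vertices of `S`, of their neighbours on the path,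
and of the last vertex. -/
theorem exists_closed_set_on_path {V : Type} (G : SimpleGraph V) (U : Finset V) (hU : U.Nonempty) :
    ∃ (p : ℕ → V) (N : ℕ) (T : Finset ℕ) (S : Finset V),
      (∀ i j, i ≤ N → j ≤ N → p i = p j → i = j) ∧
      (∀ i, i < N → G.Adj (p i) (p (i + 1))) ∧
      (∀ i ∈ T, i ≤ N) ∧ T.card ≤ 4 * S.card ∧ S.Nonempty ∧ S ⊆ U ∧
      (∀ v ∈ S, ∃ i ∈ T, v = p i) ∧
      (∀ v ∈ S, ∀ w ∈ U, G.Adj v w → ∃ i ∈ T, w = p i) := by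
  classical
  obtain ⟨v₀, hv₀⟩ := hU
  let good : List V → Prop := fun L => L.IsChain G.Adj ∧ L.Nodup ∧ ∀ x ∈ L, x ∈ U
  have hbound : ∀ L, good L → L.length ≤ U.card := by
    intro L hL
    rw [← List.toFinset_card_of_nodup hL.2.1]
    exact Finset.card_le_card fun x hx => hL.2.2 x (by simpa using hx)
  obtain ⟨P, hP, hmax⟩ : ∃ P, good P ∧ ∀ L, good L → L.length ≤ P.length := by
    have hex : ∃ n, ∃ L, good L ∧ L.length = n := ⟨0, [], by simp [good], rfl⟩
    have hb : ∀ n, (∃ L, good L ∧ L.length = n) → n ≤ U.card := by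
      rintro n ⟨L, h, rfl⟩; exact hbound L h
    obtain ⟨P, hP, hl⟩ := Nat.findGreatest_spec (P := fun n => ∃ L, good L ∧ L.length = n)
      (hb _ hex.choose_spec) hex.choose_spec
    exact ⟨P, hP, fun L hL => hl ▸ Nat.le_findGreatest (hbound L hL) ⟨L, hL, rfl⟩⟩
  have hPpos : 1 ≤ P.length := by
    simpa using hmax [v₀] ⟨by simp, by simp, by simpa using hv₀⟩
  have hreach : ∀ L, Relation.ReflTransGen (Rot G) P L → good L ∧ L.Perm P := by
    intro L h
    induction h with
    | refl => exact ⟨hP, .refl _⟩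
    | tail _ hr ih =>
      obtain ⟨⟨h1, h2, h3⟩, h4⟩ := ih
      exact ⟨⟨hr.isChain h1, hr.perm.nodup_iff.2 h2, fun x hx => h3 x (hr.perm.mem_iff.1 hx)⟩,
        hr.perm.trans h4⟩
  set S := U.filter fun v => ∃ L, Relation.ReflTransGen (Rot G) P L ∧ L.head? = some v with hS
  have hmemS : ∀ L v, Relation.ReflTransGen (Rot G) P L → L.head? = some v → v ∈ S := by
    intro L v h h'
    exact Finset.mem_filter.2 ⟨(hreach L h).1.2.2 v (List.mem_of_mem_head? h'), L, h, h'⟩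
  -- an edge of `P` survives all rotations unless it meets `S`
  have hcons : ∀ L, Relation.ReflTransGen (Rot G) P L → ∀ a b, Consec P a b →
      a ∈ S ∨ b ∈ S ∨ Consec L a b ∨ Consec L b a := by
    intro L h
    induction h with
    | refl => exact fun a b h => .inr (.inr (.inl h))
    | tail h1 hr ih =>
      intro a b hab
      have hhead := fun v => hmemS _ v (h1.tail hr)
      rcases ih a b hab with h | h | h | h
      · exact .inl h
      · exact .inr (.inl h)
      · have := hr.consec h
        grind
      · have := hr.consec h
        grind
  let p : ℕ → V := fun i => P.getD i v₀
  have hp : ∀ i, i < P.length → P[i]? = some (p i) := by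
    intro i hi
    simp [p, hi]
  have hinj : ∀ i j, i ≤ P.length - 1 → j ≤ P.length - 1 → p i = p j → i = j := by
    intro i j hi hj h
    have h1 := hp i (by omega)
    have h2 := hp j (by omega)
    exact (List.getElem?_inj (by omega) hP.2.1).1 (by rw [h1, h2, h])
  set Q := (Finset.range P.length).filter fun i => p i ∈ S with hQ
  have hsurj : ∀ v ∈ U, v ∈ P → ∃ i, i < P.length ∧ p i = v := by
    intro v _ hv
    obtain ⟨i, hi, h⟩ := List.getElem_of_mem hv
    exact ⟨i, hi, by simp [p, hi, h]⟩
  have hSP : ∀ v ∈ S, v ∈ P := by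
    intro v hv
    obtain ⟨-, L, h, h'⟩ := Finset.mem_filter.1 hv
    exact (hreach L h).2.mem_iff.1 (List.mem_of_mem_head? h')
  have hQcard : Q.card ≤ S.card := by
    refine Finset.card_le_card_of_injOn p (fun i hi => by simpa using (Finset.mem_filter.1 hi).2) ?_
    intro i hi j hj h
    simp [hQ] at hi hj
    exact hinj i j (by omega) (by omega) h
  have hSne : S.Nonempty := by
    refine ⟨p 0, hmemS P _ .refl ?_⟩
    rw [List.head?_eq_getElem?]
    exact hp 0 (by omega)
  refine ⟨p, P.length - 1, (Q ∪ Q.image (· + 1) ∪ Q.image (· - 1) ∪ {P.length - 1}).filter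
    (· ≤ P.length - 1), S, hinj, ?_, fun i hi => (Finset.mem_filter.1 hi).2, ?_, hSne,
    Finset.filter_subset _ _, ?_, ?_⟩
  · intro i hi
    have := List.isChain_iff_getElem.1 hP.1 i (by omega)
    have h1 := hp i (by omega)
    have h2 := hp (i + 1) (by omega)
    rw [List.getElem?_eq_some_iff] at h1 h2
    obtain ⟨_, h1⟩ := h1
    obtain ⟨_, h2⟩ := h2
    rwa [h1, h2] at this
  · have h0 := hSne.card_pos
    have h1 : (Q.image (· + 1)).card ≤ Q.card := Finset.card_image_le
    have h2 : (Q.image (· - 1)).card ≤ Q.card := Finset.card_image_le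
    refine (Finset.card_filter_le _ _).trans ?_
    refine (Finset.card_union_le _ _).trans ?_
    have h3 := Finset.card_union_le (Q ∪ Q.image (· + 1)) (Q.image (· - 1))
    have h4 := Finset.card_union_le Q (Q.image (· + 1))
    rw [Finset.card_singleton]
    omega
  · intro v hv
    obtain ⟨i, hi, rfl⟩ := hsurj v (Finset.filter_subset _ _ hv) (hSP v hv)
    refine ⟨i, ?_, rfl⟩
    simp [hQ, hi, hv]
    omega
  · intro v hv w hw hvw
    obtain ⟨-, L, hL, hLv⟩ := Finset.mem_filter.1 hv
    obtain ⟨⟨hc, hnd, hLU⟩, hperm⟩ := hreach L hL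
    have hwL : w ∈ L := by
      by_contra hcon
      have := hmax (w :: L) ⟨?_, by simp [hcon, hnd], by simpa [hw] using hLU⟩
      · rw [List.length_cons, hperm.length_eq] at this
        omega
      · rw [List.isChain_cons]
        refine ⟨fun y hy => ?_, hc⟩
        rw [hLv] at hy
        cases hy
        exact hvw.symm
    obtain ⟨i, hi, rfl⟩ := hsurj w hw (hperm.mem_iff.1 hwL)
    refine ⟨i, ?_, rfl⟩
    by_contra hiT
    simp only [Finset.mem_filter, Finset.mem_union, Finset.mem_image, Finset.mem_singleton, hQ,
      Finset.mem_range] at hiT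
    have hiS : p i ∉ S := fun h => hiT ⟨.inl (.inl (.inl ⟨hi, h⟩)), by omega⟩
    have hilast : i ≠ P.length - 1 := fun h => hiT ⟨.inr h, by omega⟩
    have hprev : ∀ j, j + 1 = i → p j ∉ S :=
      fun j hj h => hiT ⟨.inl (.inl (.inr ⟨j, ⟨by omega, h⟩, hj⟩)), by omega⟩
    have hnext : p (i + 1) ∉ S :=
      fun h => hiT ⟨.inl (.inr ⟨i + 1, ⟨by omega, h⟩, by omega⟩), by omega⟩
    have hi0 : i ≠ 0 := by
      rintro rfl
      refine hiS (hmemS P _ .refl ?_)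
      rw [List.head?_eq_getElem?]
      exact hp 0 (by omega)
    -- `w` now has two neighbours on `P`; outside `S`, both must follow `w` on `L`
    obtain ⟨j, rfl⟩ := Nat.exists_eq_succ_of_ne_zero hi0
    rw [Nat.succ_eq_add_one] at *
    have hj := hprev j rfl
    have c1 := hcons L hL (p j) (p (j + 1)) ⟨j, hp _ (by omega), hp _ (by omega)⟩
    have c2 := hcons L hL (p (j + 1)) (p (j + 1 + 1)) ⟨j + 1, hp _ (by omega), hp _ (by omega)⟩
    -- the predecessor of `w` on `L` is an endpoint after one more rotation
    have hpred : ∀ a, Consec L a (p (j + 1)) → a ∈ S := by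
      rintro a ⟨k, hk1, hk2⟩
      obtain ⟨hk, hk2'⟩ := List.getElem?_eq_some_iff.1 hk2
      have hsplit : L = L.take (k + 1) ++ p (j + 1) :: L.drop (k + 2) := by
        rw [← hk2', ← List.drop_eq_getElem_cons, List.take_append_drop]
      obtain ⟨B, hB⟩ : ∃ B, L.take (k + 1) = v :: B := by
        cases L with
        | nil => simp at hLv
        | cons x L => simp at hLv; subst hLv; exact ⟨L.take k, by simp⟩
      refine hmemS ((L.take (k + 1)).reverse ++ p (j + 1) :: L.drop (k + 2)) a
        (hL.tail ⟨v, B, p (j + 1), L.drop (k + 2), by rw [← hB]; exact hsplit, hvw, by rw [hB]⟩) ?_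
      rw [List.head?_append, List.head?_reverse, List.getLast?_eq_getElem?]
      have : (L.take (k + 1)).length = k + 1 := by simp; omega
      rw [this, Nat.add_sub_cancel, List.getElem?_take_of_lt (by omega), hk1]; rfl
    have d1 : Consec L (p (j + 1)) (p j) := by
      have := hpred (p j); tauto
    have d2 : Consec L (p (j + 1)) (p (j + 1 + 1)) := by
      have := hpred (p (j + 1 + 1)); tauto
    obtain ⟨k, hk1, hk2⟩ := d1
    obtain ⟨l, hl1, hl2⟩ := d2
    have hkl : k = l := by
      exact (List.getElem?_inj (List.getElem?_eq_some_iff.1 hk1).1 hnd).1 (hk1.trans hl1.symm)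
    subst hkl
    have := hinj j (j + 1 + 1) (by omega) (by omega) (Option.some.inj (hk2.symm.trans hl2))
    omega

/-! ### Assembling the separating system -/

/-- Induction on the vertex set `U`, deleting the set `S` given by Pósa's lemma. -/
theorem exists_strong_sep {V : Type} (G : SimpleGraph V) :
    ∀ (n : ℕ) (U : Finset V), U.card = n →
      ∃ Ps : List ((u : V) × (v : V) × G.Walk u v),
        (∀ q ∈ Ps, q.2.2.IsPath) ∧ Ps.length ≤ 44 * U.card ∧
        ∀ x ∈ U, ∀ y ∈ U, G.Adj x y → ∀ f, f ≠ s(x, y) →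
          ∃ q ∈ Ps, s(x, y) ∈ q.2.2.edges ∧ f ∉ q.2.2.edges := by
  classical
  intro n
  induction n using Nat.strong_induction_on with
  | _ n ih =>
  rintro U rfl
  rcases U.eq_empty_or_nonempty with rfl | hU
  · exact ⟨[], by simp, by simp, by simp⟩
  obtain ⟨p, N, T, S, hinj, hadj, hTN, hTS, hS, hSU, hST, hNT⟩ := exists_closed_set_on_path G U hU
  have hcard := Finset.card_sdiff_add_card_eq_card hSU
  have hSpos := hS.card_pos
  obtain ⟨Ps, h1, h2, h3⟩ := exists_sep_on_path p N hinj hadj T hTN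
  obtain ⟨Qs, k1, k2, k3⟩ := ih (U \ S).card (by omega) (U \ S) rfl
  have hsep : ∀ x ∈ S, ∀ y ∈ U, G.Adj x y → ∀ f, f ≠ s(x, y) →
      ∃ q ∈ Ps ++ Qs, s(x, y) ∈ q.2.2.edges ∧ f ∉ q.2.2.edges := by
    intro x hx y hy hxy f hf
    obtain ⟨i, hi, rfl⟩ := hST x hx
    obtain ⟨j, hj, rfl⟩ := hNT _ hx y hy hxy
    obtain ⟨q, hq, h⟩ := h3 i hi j hj hxy f hf
    exact ⟨q, List.mem_append_left _ hq, h⟩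
  refine ⟨Ps ++ Qs, ?_, ?_, ?_⟩
  · intro q hq
    exact (List.mem_append.1 hq).elim (h1 q) (k1 q)
  · rw [List.length_append]
    omega
  · intro x hx y hy hxy f hf
    by_cases hxS : x ∈ S
    · exact hsep x hxS y hy hxy f hf
    by_cases hyS : y ∈ S
    · rw [Sym2.eq_swap] at hf ⊢
      exact hsep y hyS x hx hxy.symm f hf
    obtain ⟨q, hq, h⟩ := k3 x (by simp [hx, hxS]) y (by simp [hy, hyS]) hxy f hf
    exact ⟨q, List.mem_append_right _ hq, h⟩


/-- For every graph `G` on `n ≥ 2` vertices there is a subgraph `G₁ ⊆ G` with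
`e(G₁) ≤ n (log n)^55` and a collection of at most `1300 n` paths in `G` that
strongly separates the edges of `G` which are not edges of `G₁`. -/
theorem sep_all_but_polylog (V : Type) [Fintype V] (G : SimpleGraph V)
    (hn : 2 ≤ Fintype.card V) :
    ∃ G₁ : SimpleGraph V, G₁ ≤ G ∧
      ((G₁.edgeSet.ncard : ℝ) ≤
        (Fintype.card V : ℝ) * (Real.logb 2 (Fintype.card V))^55) ∧
      ∃ Ps : List ((u : V) × (v : V) × G.Walk u v),
        (∀ p ∈ Ps, p.2.2.IsPath) ∧
        Ps.length ≤ 1300 * Fintype.card V ∧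
        (∀ e ∈ G.edgeSet \ G₁.edgeSet, ∀ f ∈ G.edgeSet \ G₁.edgeSet, e ≠ f →
          ∃ p ∈ Ps, e ∈ p.2.2.edges ∧ f ∉ p.2.2.edges) := by
  obtain ⟨Ps, h1, h2, h3⟩ := exists_strong_sep G _ Finset.univ rfl
  refine ⟨⊥, bot_le, ?_, Ps, h1, ?_, ?_⟩
  · have : 0 ≤ Real.logb 2 (Fintype.card V) :=
      Real.logb_nonneg (by norm_num) (by exact_mod_cast (by omega : 1 ≤ Fintype.card V))
    simp only [SimpleGraph.edgeSet_bot, Set.ncard_empty, Nat.cast_zero]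
    positivity
  · rw [Finset.card_univ] at h2
    omega
  · rintro e ⟨he, -⟩ f - hef
    induction e with
    | _ x y => exact h3 x (Finset.mem_univ _) y (Finset.mem_univ _) he f hef.symm
end

section
/- There exists d₀ such that the following holds. Suppose G is a graph on n vertices with average degree d = 2e(G)/n, where d ≥ d₀. Then there exist a subgraph G₁ ⊆ G, a collection ℋ of subgraphs of G, and a collection 𝒫 of paths in G such that: (1) the graphs in ℋ are mutually edge-disjoint, every H ∈ ℋ has |H| ≤ 2^{(log d)^7} vertices, and Σ_{H∈ℋ} |H| ≤ 4n; (2) 𝒫 strongly separates the set of edges of G that are neither edges of G₁ nor edges of any H ∈ ℋ, and |𝒫| ≤ 80n; (3) G₁ has average degree at most (log d)^3. -/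
/-!
In fact all edges of any graph on `n` vertices can be strongly separated by `40 n` paths, so one may
take `G₁` empty and `ℋ` empty; `d₀ = 1` only ensures `log d ≥ 0`. The argument combines Pósa
rotations with zigzag paths along a longest path.

*Zigzags.* Let `P = x₀ x₁ …` be a path and `Y` a set of `m` of its vertices, each given its rank
`r` in the order along `P`. The edges `uv` inside `Y` (with `u` before `v`) with a fixed value of
`r u + r v` are pairwise nested and disjoint, and so are those with a fixed value of `r u + 2 r v`.
A nested family is contained in two paths that zigzag between its members along complementary
segments of `P`, so that these two paths share only members of the family
(`exists_zigzag_pair`). An edge inside `Y` is determined by its two weighted sums, so the at most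
`2 (2m + 3m)` zigzags separate it from everything else (`exists_paths_of_subset_path`).

*Rotations.* Let `P` be a longest path in `G[U]` and let `S` be the set of ends of paths obtained
from `P` by rotations fixing the other end. By maximality all neighbours in `U` of `S` lie on `P`,
and by Pósa's lemma (`posa`) each of them is in `S`, or next to a vertex of `S` on `P`, or the fixed
end of `P`. So `Y = S ∪ N(S)` has at most `4 |S|` vertices, and `40 |S|` paths separate all edges of
`G[U]` meeting `S` from all other edges (`exists_removable`). Then `S` is deleted from `U`, and the
argument repeats (`exists_separating`).
-/

/-! ### Zigzag paths through nested edges -/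

/-- Let `x 0, …, x (k-1)` be a path of `G` and let `M` be a matching of chords, any two of which are
nested. Inside every interval `[i, j]` there are a path starting at `x i` and a path starting at
`x j`, each containing all the chords in the interval, and having no edges in common but chords.
Both zigzag between consecutive chords along the original path; they use complementary
segments of it. The induction peels off an end of the interval. -/
theorem exists_zigzag_pair {V : Type*} (G : SimpleGraph V) (x : ℕ → V) (k : ℕ)
    (hinj : ∀ i < k, ∀ j < k, x i = x j → i = j)
    (hadj : ∀ i, i + 1 < k → G.Adj (x i) (x (i + 1)))
    (M : ℕ → ℕ → Prop) (hM : ∀ a b, M a b → a < b ∧ G.Adj (x a) (x b))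
    (hnest : ∀ a b a' b', M a b → M a' b' → a < a' → b' < b)
    (huniq : ∀ a b b', M a b → M a b' → b = b') :
    ∀ n i j, i ≤ j → j < k → j - i ≤ n →
      ∃ (u v : V) (p : G.Walk (x i) u) (q : G.Walk (x j) v),
        p.IsPath ∧ q.IsPath ∧
        (∀ y ∈ p.support, ∃ t, i ≤ t ∧ t ≤ j ∧ y = x t) ∧
        (∀ y ∈ q.support, ∃ t, i ≤ t ∧ t ≤ j ∧ y = x t) ∧
        (∀ a b, i ≤ a → b ≤ j → M a b → s(x a, x b) ∈ p.edges ∧ s(x a, x b) ∈ q.edges) ∧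
        (∀ e, e ∈ p.edges → e ∈ q.edges → ∃ a b, M a b ∧ e = s(x a, x b)) := by
  intro n
  induction n with
  | zero =>
    intro i j hij hj hn
    obtain rfl : i = j := by omega
    refine ⟨x i, x i, .nil, .nil, by simp, by simp, ?_, ?_, ?_, by simp⟩
    · intro y hy; exact ⟨i, le_rfl, le_rfl, by simpa using hy⟩
    · intro y hy; exact ⟨i, le_rfl, le_rfl, by simpa using hy⟩
    · intro a b ha hb hab; have := (hM a b hab).1; omega
  | succ n ih =>
    intro i j hij hj hn
    rcases Nat.eq_or_lt_of_le hij with rfl | hlt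
    · exact ih i i le_rfl hj (by omega)
    by_cases hMij : M i j
    · have hadjij := (hM i j hMij).2
      have hin : ∀ a b, i ≤ a → b ≤ j → M a b → (a = i ∧ b = j) ∨ (i + 1 ≤ a ∧ b ≤ j - 1) := by
        intro a b ha hb hab
        rcases Nat.eq_or_lt_of_le ha with rfl | ha
        · exact Or.inl ⟨rfl, huniq _ _ _ hab hMij⟩
        · have := hnest _ _ _ _ hMij hab ha; right; omega
      rcases Nat.eq_or_lt_of_le (Nat.succ_le_of_lt hlt) with hj1 | hj1
      · refine ⟨x j, x i, .cons hadjij .nil, .cons hadjij.symm .nil, ?_, ?_, ?_, ?_, ?_, ?_⟩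
        · simpa using hadjij.ne
        · simpa using hadjij.ne'
        · intro y hy
          simp only [SimpleGraph.Walk.support_cons, SimpleGraph.Walk.support_nil,
            List.mem_cons, List.not_mem_nil, or_false] at hy
          rcases hy with rfl | rfl
          exacts [⟨i, le_rfl, hij, rfl⟩, ⟨j, hij, le_rfl, rfl⟩]
        · intro y hy
          simp only [SimpleGraph.Walk.support_cons, SimpleGraph.Walk.support_nil,
            List.mem_cons, List.not_mem_nil, or_false] at hy
          rcases hy with rfl | rfl
          exacts [⟨j, hij, le_rfl, rfl⟩, ⟨i, le_rfl, hij, rfl⟩]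
        · intro a b ha hb hab
          rcases hin a b ha hb hab with ⟨rfl, rfl⟩ | h
          · simp
          · have := (hM a b hab).1; omega
        · intro e he _
          exact ⟨i, j, hMij, by simpa using he⟩
      · obtain ⟨u, v, p, q, hp, hq, hps, hqs, hc, hd⟩ :=
          ih (i + 1) (j - 1) (by omega) (by omega) (by omega)
        have hii := hadj i (by omega)
        have hjj : G.Adj (x j) (x (j - 1)) := by
          have := (hadj (j - 1) (by omega)).symm
          rwa [Nat.sub_add_cancel (by omega)] at this
        have hne : ∀ t, i + 1 ≤ t → t ≤ j - 1 → x i ≠ x t ∧ x j ≠ x t := by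
          intro t h1 h2
          constructor
          · intro h; have := hinj i (by omega) t (by omega) h; omega
          · intro h; have := hinj j (by omega) t (by omega) h; omega
        have hip : x i ∉ p.support := fun h => by
          obtain ⟨t, h1, h2, h3⟩ := hps _ h; exact (hne t h1 h2).1 h3
        have hjp : x j ∉ p.support := fun h => by
          obtain ⟨t, h1, h2, h3⟩ := hps _ h; exact (hne t h1 h2).2 h3
        have hiq : x i ∉ q.support := fun h => by
          obtain ⟨t, h1, h2, h3⟩ := hqs _ h; exact (hne t h1 h2).1 h3
        have hjq : x j ∉ q.support := fun h => by
          obtain ⟨t, h1, h2, h3⟩ := hqs _ h; exact (hne t h1 h2).2 h3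
        -- cross the chord, then continue from the far end of the inner interval
        refine ⟨v, u, .cons hadjij (.cons hjj q), .cons hadjij.symm (.cons hii p),
          ?_, ?_, ?_, ?_, ?_, ?_⟩
        · simp [SimpleGraph.Walk.cons_isPath_iff, hq, hiq, hjq, hadjij.ne]
        · simp [SimpleGraph.Walk.cons_isPath_iff, hp, hip, hjp, hadjij.ne']
        · intro y hy
          simp only [SimpleGraph.Walk.support_cons, List.mem_cons] at hy
          rcases hy with rfl | rfl | hy
          · exact ⟨i, le_rfl, hij, rfl⟩
          · exact ⟨j, hij, le_rfl, rfl⟩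
          · obtain ⟨t, h1, h2, h3⟩ := hqs _ hy; exact ⟨t, by omega, by omega, h3⟩
        · intro y hy
          simp only [SimpleGraph.Walk.support_cons, List.mem_cons] at hy
          rcases hy with rfl | rfl | hy
          · exact ⟨j, hij, le_rfl, rfl⟩
          · exact ⟨i, le_rfl, hij, rfl⟩
          · obtain ⟨t, h1, h2, h3⟩ := hps _ hy; exact ⟨t, by omega, by omega, h3⟩
        · intro a b ha hb hab
          rcases hin a b ha hb hab with ⟨rfl, rfl⟩ | ⟨h1, h2⟩
          · simp [Sym2.eq_swap]
          · have := hc a b h1 h2 hab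
            simp [this.1, this.2]
        · intro e he he'
          simp only [SimpleGraph.Walk.edges_cons, List.mem_cons] at he he'
          rcases he with rfl | rfl | he
          · exact ⟨i, j, hMij, rfl⟩
          · exfalso
            rcases he' with h | h | h
            · rw [Sym2.eq_iff] at h
              have := hne (j - 1) (by omega) le_rfl
              rcases h with ⟨_, h⟩ | ⟨h, _⟩
              · exact this.1 h.symm
              · exact hadjij.ne h.symm
            · rw [Sym2.eq_iff] at h
              have := hne (i + 1) le_rfl (by omega)
              rcases h with ⟨h, _⟩ | ⟨h, _⟩
              · exact hadjij.ne h.symm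
              · exact this.2 h
            · exact hjp (p.fst_mem_support_of_mem_edges h)
          · rcases he' with rfl | rfl | he'
            · exact ⟨i, j, hMij, Sym2.eq_swap⟩
            · exact absurd (q.fst_mem_support_of_mem_edges he) hiq
            · exact hd e he' he
    · by_cases hi : ∃ b ≤ j, M i b
      · have hjun : ∀ a, i ≤ a → ¬ M a j := by
          intro a ha haj
          obtain ⟨b, hb, hib⟩ := hi
          rcases Nat.eq_or_lt_of_le ha with rfl | ha
          · exact hMij haj
          · have := hnest _ _ _ _ hib haj ha; omega
        obtain ⟨u, v, p, q, hp, hq, hps, hqs, hc, hd⟩ :=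
          ih i (j - 1) (by omega) (by omega) (by omega)
        have hjj : G.Adj (x j) (x (j - 1)) := by
          have := (hadj (j - 1) (by omega)).symm
          rwa [Nat.sub_add_cancel (by omega)] at this
        have hne : ∀ t, t ≤ j - 1 → x j ≠ x t := by
          intro t h2 h; have := hinj j (by omega) t (by omega) h; omega
        have hjp : x j ∉ p.support := fun h => by
          obtain ⟨t, h1, h2, h3⟩ := hps _ h; exact hne t h2 h3
        have hjq : x j ∉ q.support := fun h => by
          obtain ⟨t, h1, h2, h3⟩ := hqs _ h; exact hne t h2 h3
        refine ⟨u, v, p, .cons hjj q, hp, ?_, ?_, ?_, ?_, ?_⟩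
        · simp [SimpleGraph.Walk.cons_isPath_iff, hq, hjq]
        · intro y hy
          obtain ⟨t, h1, h2, h3⟩ := hps _ hy; exact ⟨t, by omega, by omega, h3⟩
        · intro y hy
          simp only [SimpleGraph.Walk.support_cons, List.mem_cons] at hy
          rcases hy with rfl | hy
          · exact ⟨j, hij, le_rfl, rfl⟩
          · obtain ⟨t, h1, h2, h3⟩ := hqs _ hy; exact ⟨t, by omega, by omega, h3⟩
        · intro a b ha hb hab
          have hbj : b ≠ j := by rintro rfl; exact hjun a ha hab
          have := hc a b ha (by omega) hab
          simp [this.1, this.2]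
        · intro e he he'
          simp only [SimpleGraph.Walk.edges_cons, List.mem_cons] at he'
          rcases he' with rfl | he'
          · exact absurd (p.fst_mem_support_of_mem_edges he) hjp
          · exact hd e he he'
      · obtain ⟨u, v, p, q, hp, hq, hps, hqs, hc, hd⟩ :=
          ih (i + 1) j (by omega) (by omega) (by omega)
        have hii := hadj i (by omega)
        have hne : ∀ t, i + 1 ≤ t → t ≤ j → x i ≠ x t := by
          intro t h1 h2 h; have := hinj i (by omega) t (by omega) h; omega
        have hip : x i ∉ p.support := fun h => by
          obtain ⟨t, h1, h2, h3⟩ := hps _ h; exact hne t h1 h2 h3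
        have hiq : x i ∉ q.support := fun h => by
          obtain ⟨t, h1, h2, h3⟩ := hqs _ h; exact hne t h1 h2 h3
        refine ⟨u, v, .cons hii p, q, ?_, hq, ?_, ?_, ?_, ?_⟩
        · simp [SimpleGraph.Walk.cons_isPath_iff, hp, hip]
        · intro y hy
          simp only [SimpleGraph.Walk.support_cons, List.mem_cons] at hy
          rcases hy with rfl | hy
          · exact ⟨i, le_rfl, hij, rfl⟩
          · obtain ⟨t, h1, h2, h3⟩ := hps _ hy; exact ⟨t, by omega, by omega, h3⟩
        · intro y hy
          obtain ⟨t, h1, h2, h3⟩ := hqs _ hy; exact ⟨t, by omega, by omega, h3⟩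
        · intro a b ha hb hab
          have hai : a ≠ i := by rintro rfl; exact hi ⟨b, hb, hab⟩
          have := hc a b (by omega) hb hab
          simp [this.1, this.2]
        · intro e he he'
          simp only [SimpleGraph.Walk.edges_cons, List.mem_cons] at he
          rcases he with rfl | he
          · exact absurd (q.fst_mem_support_of_mem_edges he') hiq
          · exact hd e he he'

/-- Let `x 0, …, x (k-1)` be a path of `G` and `Y` a set of `m` vertices on it. Then `10 m` paths of
`G` suffice to separate every edge with both ends in `Y` from every other edge. -/
theorem exists_paths_of_subset_path {V : Type*} (G : SimpleGraph V) (x : ℕ → V) (k : ℕ)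
    (hinj : ∀ i < k, ∀ j < k, x i = x j → i = j)
    (hadj : ∀ i, i + 1 < k → G.Adj (x i) (x (i + 1)))
    (Y : Finset V) (hY : ∀ y ∈ Y, ∃ i < k, y = x i) :
    ∃ Ps : List ((u : V) × (v : V) × G.Walk u v),
      (∀ p ∈ Ps, p.2.2.IsPath) ∧ Ps.length ≤ 10 * Y.card ∧
      ∀ u ∈ Y, ∀ v ∈ Y, G.Adj u v → ∀ f, s(u, v) ≠ f →
        ∃ p ∈ Ps, s(u, v) ∈ p.2.2.edges ∧ f ∉ p.2.2.edges := by
  classical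
  rcases Nat.eq_zero_or_pos k with rfl | hk
  · refine ⟨[], by simp, by simp, ?_⟩
    intro u hu
    obtain ⟨i, hi, _⟩ := hY u hu
    omega
  set Q : ℕ → Prop := fun i => i < k ∧ x i ∈ Y with hQ
  -- `Nat.count Q i` is the rank of `x i` among the vertices of `Y`, in the order along the path
  have hrank : ∀ i, Nat.count Q i ≤ Y.card := by
    intro i
    rw [Nat.count_eq_card_filter_range]
    refine Finset.card_le_card_of_injOn x ?_ ?_
    · intro a ha
      simp only [Finset.coe_filter, Set.mem_ofPred_eq] at ha
      exact ha.2.2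
    · intro a ha b hb hab
      simp only [Finset.coe_filter, Set.mem_ofPred_eq] at ha hb
      exact hinj a ha.2.1 b hb.2.1 hab
  have hrank' : ∀ i, Q i → Nat.count Q i < Y.card := fun i hi =>
    lt_of_lt_of_le (Nat.count_strict_mono hi (Nat.lt_succ_self i)) (hrank _)
  set M : ℕ → ℕ → ℕ → ℕ → Prop := fun w c a b =>
    a < b ∧ Q a ∧ Q b ∧ G.Adj (x a) (x b) ∧ Nat.count Q a + (w + 1) * Nat.count Q b = c with hMdef
  have key : ∀ w c, ∃ (p q : (u : V) × (v : V) × G.Walk u v),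
      p.2.2.IsPath ∧ q.2.2.IsPath ∧
      (∀ a b, M w c a b → s(x a, x b) ∈ p.2.2.edges ∧ s(x a, x b) ∈ q.2.2.edges) ∧
      (∀ e, e ∈ p.2.2.edges → e ∈ q.2.2.edges → ∃ a b, M w c a b ∧ e = s(x a, x b)) := by
    intro w c
    obtain ⟨u, v, p, q, hp, hq, -, -, hc, hd⟩ :=
      exists_zigzag_pair G x k hinj hadj (M w c) (fun a b h => ⟨h.1, h.2.2.2.1⟩)
      (by
        intro a b a' b' h h' hlt
        have h1 := Nat.count_strict_mono h.2.1 hlt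
        have e1 := h.2.2.2.2
        have e2 := h'.2.2.2.2
        by_contra hcon
        have h2 := Nat.count_monotone Q (not_lt.mp hcon)
        have h3 := Nat.mul_le_mul_left (w + 1) h2
        omega)
      (by
        intro a b b' h h'
        have e1 := h.2.2.2.2
        have e2 := h'.2.2.2.2
        have : (w + 1) * Nat.count Q b = (w + 1) * Nat.count Q b' := by omega
        exact Nat.count_injective h.2.2.1 h'.2.2.1 (Nat.eq_of_mul_eq_mul_left (by omega) this))
      k 0 (k - 1) (by omega) (by omega) (by omega)
    refine ⟨⟨_, _, p⟩, ⟨_, _, q⟩, hp, hq, ?_, hd⟩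
    intro a b hab
    have := hab.2.2.1.1
    exact hc a b (Nat.zero_le _) (by omega) hab
  choose p q hp hq hc hd using key
  refine ⟨(List.range (2 * Y.card)).map (p 0) ++ (List.range (2 * Y.card)).map (q 0) ++
    (List.range (3 * Y.card)).map (p 1) ++ (List.range (3 * Y.card)).map (q 1), ?_, ?_, ?_⟩
  · intro r hr
    simp only [List.mem_append, List.mem_map] at hr
    rcases hr with ((⟨c, _, rfl⟩ | ⟨c, _, rfl⟩) | ⟨c, _, rfl⟩) | ⟨c, _, rfl⟩
    exacts [hp _ _, hq _ _, hp _ _, hq _ _]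
  · simp only [List.length_append, List.length_map, List.length_range]
    omega
  · have main : ∀ a b, a < b → Q a → Q b → G.Adj (x a) (x b) → ∀ f, s(x a, x b) ≠ f →
        ∃ r ∈ (List.range (2 * Y.card)).map (p 0) ++ (List.range (2 * Y.card)).map (q 0) ++
          (List.range (3 * Y.card)).map (p 1) ++ (List.range (3 * Y.card)).map (q 1),
          s(x a, x b) ∈ r.2.2.edges ∧ f ∉ r.2.2.edges := by
      intro a b hlt ha hb hab f hf
      by_contra! hcon
      have ra := hrank' a ha
      have rb := hrank' b hb
      have m0 : M 0 (Nat.count Q a + (0 + 1) * Nat.count Q b) a b := ⟨hlt, ha, hb, hab, rfl⟩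
      have m1 : M 1 (Nat.count Q a + (1 + 1) * Nat.count Q b) a b := ⟨hlt, ha, hb, hab, rfl⟩
      have i0 : Nat.count Q a + (0 + 1) * Nat.count Q b < 2 * Y.card := by omega
      have i1 : Nat.count Q a + (1 + 1) * Nat.count Q b < 3 * Y.card := by omega
      obtain ⟨a', b', h', e'⟩ := hd 0 _ f
        (hcon (p 0 (Nat.count Q a + (0 + 1) * Nat.count Q b))
          (by simp only [List.mem_append, List.mem_map, List.mem_range]
              exact Or.inl (Or.inl (Or.inl ⟨_, i0, rfl⟩))) (hc _ _ _ _ m0).1)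
        (hcon (q 0 (Nat.count Q a + (0 + 1) * Nat.count Q b))
          (by simp only [List.mem_append, List.mem_map, List.mem_range]
              exact Or.inl (Or.inl (Or.inr ⟨_, i0, rfl⟩))) (hc _ _ _ _ m0).2)
      obtain ⟨a'', b'', h'', e''⟩ := hd 1 _ f
        (hcon (p 1 (Nat.count Q a + (1 + 1) * Nat.count Q b))
          (by simp only [List.mem_append, List.mem_map, List.mem_range]
              exact Or.inl (Or.inr ⟨_, i1, rfl⟩)) (hc _ _ _ _ m1).1)
        (hcon (q 1 (Nat.count Q a + (1 + 1) * Nat.count Q b))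
          (by simp only [List.mem_append, List.mem_map, List.mem_range]
              exact Or.inr ⟨_, i1, rfl⟩) (hc _ _ _ _ m1).2)
      have heq : a' = a'' ∧ b' = b'' := by
        rw [e', Sym2.eq_iff] at e''
        rcases e'' with ⟨h1, h2⟩ | ⟨h1, h2⟩
        · exact ⟨hinj _ h'.2.1.1 _ h''.2.1.1 h1, hinj _ h'.2.2.1.1 _ h''.2.2.1.1 h2⟩
        · have h1 := hinj _ h'.2.1.1 _ h''.2.2.1.1 h1
          have h2 := hinj _ h'.2.2.1.1 _ h''.2.1.1 h2
          have := h'.1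
          have := h''.1
          omega
      obtain ⟨rfl, rfl⟩ := heq
      -- the two weighted sums of the ranks determine both ranks
      have s0 := h'.2.2.2.2
      have s1 := h''.2.2.2.2
      have := Nat.count_injective h'.2.1 ha (by omega)
      have := Nat.count_injective h'.2.2.1 hb (by omega)
      subst_vars
      exact hf rfl
    intro u hu v hv huv f hf
    obtain ⟨a, ha, rfl⟩ := hY u hu
    obtain ⟨b, hb, rfl⟩ := hY v hv
    rcases lt_trichotomy a b with h | rfl | h
    · exact main a b h ⟨ha, hu⟩ ⟨hb, hv⟩ huv f hf
    · exact absurd rfl huv.ne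
    · rw [Sym2.eq_swap] at hf ⊢
      exact main b a h ⟨hb, hv⟩ ⟨ha, hu⟩ huv.symm f hf

/-! ### Pósa rotations -/

/-- The edges of a path given by the list of its vertices. -/
def listEdges {V : Type*} : List V → List (Sym2 V)
  | [] => []
  | [_] => []
  | u :: v :: t => s(u, v) :: listEdges (v :: t)

theorem listEdges_append {V : Type*} (A B : List V) (w y : V) :
    listEdges (A ++ w :: y :: B) = listEdges (A ++ [w]) ++ s(w, y) :: listEdges (y :: B) := by
  induction A with
  | nil => simp [listEdges]
  | cons a A ih =>
    cases A with
    | nil => simp [listEdges]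
    | cons a' A => simpa [listEdges] using ih

theorem mem_listEdges_reverse {V : Type*} (l : List V) (e : Sym2 V) :
    e ∈ listEdges l.reverse ↔ e ∈ listEdges l := by
  induction l with
  | nil => simp
  | cons a l ih =>
    cases l with
    | nil => simp
    | cons b l =>
      have h : (a :: b :: l).reverse = l.reverse ++ b :: a :: [] := by simp
      rw [h, listEdges_append]
      have h2 : l.reverse ++ [b] = (b :: l).reverse := by simp
      rw [h2]
      simp only [listEdges, List.mem_append, List.mem_cons, List.not_mem_nil, or_false, ih]
      rw [Sym2.eq_swap, or_comm]

theorem mem_of_mem_listEdges {V : Type*} (l : List V) (a b : V) (h : s(a, b) ∈ listEdges l) :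
    a ∈ l := by
  induction l with
  | nil => simp [listEdges] at h
  | cons u l ih =>
    cases l with
    | nil => simp [listEdges] at h
    | cons v l =>
      simp only [listEdges, List.mem_cons, Sym2.eq_iff] at h
      rcases h with (⟨rfl, _⟩ | ⟨rfl, _⟩) | h
      · simp
      · simp
      · exact List.mem_cons_of_mem _ (ih h)

/-- In a path through `w`, the only neighbours of `w` are the vertices next to it. -/
theorem eq_or_head_of_mem_listEdges {V : Type*} (A B : List V) (w' w q : V)
    (hnd : (A ++ w' :: w :: B).Nodup) (h : s(q, w) ∈ listEdges (A ++ w' :: w :: B)) :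
    q = w' ∨ ∃ B', B = q :: B' := by
  rw [listEdges_append] at h
  simp only [List.mem_append, List.mem_cons, Sym2.eq_iff] at h
  rcases h with h | (⟨h, _⟩ | ⟨_, h⟩) | h
  · rw [Sym2.eq_swap] at h
    have := mem_of_mem_listEdges _ _ _ h
    simp [List.nodup_append] at hnd this
    grind
  · exact Or.inl h
  · simp [List.nodup_append] at hnd
    grind
  · cases B with
    | nil => simp [listEdges] at h
    | cons b B =>
      simp only [listEdges, List.mem_cons, Sym2.eq_iff] at h
      rcases h with (⟨_, h⟩ | ⟨h, _⟩) | h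
      · simp [List.nodup_append] at hnd
        grind
      · exact Or.inr ⟨B, by rw [h]⟩
      · rw [Sym2.eq_swap] at h
        have := mem_of_mem_listEdges _ _ _ h
        simp [List.nodup_append] at hnd this
        grind

/-- `Rot G l l'` says that the path `l'` arises from the path `l` by Pósa rotations fixing the last
vertex: an edge from the head `z` to a later vertex `y` lets the segment before `y` be reversed. -/
inductive Rot_s3 {V : Type*} (G : SimpleGraph V) (l : List V) : List V → Prop
  | refl : Rot_s3 G l l
  | step (z y : V) (A B : List V) : Rot_s3 G l (z :: A ++ y :: B) → G.Adj z y →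
      Rot_s3 G l ((z :: A).reverse ++ y :: B)

theorem Rot_s3.perm {V : Type*} {G : SimpleGraph V} {l l' : List V} (h : Rot_s3 G l l') :
    l'.Perm l := by
  induction h with
  | refl => exact .refl _
  | step z y A B _ _ ih => exact ((List.reverse_perm _).append_right _).trans ih

theorem Rot_s3.isChain {V : Type*} {G : SimpleGraph V} {l l' : List V} (h : Rot_s3 G l l')
    (hl : l.IsChain G.Adj) : l'.IsChain G.Adj := by
  induction h with
  | refl => exact hl
  | step z y A B _ hzy ih =>
    rw [List.isChain_append] at ih ⊢
    refine ⟨?_, ih.2.1, ?_⟩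
    · rw [List.isChain_reverse]
      exact ih.1.imp fun _ _ h => h.symm
    · intro a ha b hb
      simp only [List.getLast?_reverse, List.head?_cons, Option.mem_def, Option.some.injEq] at ha hb
      subst ha hb
      exact hzy

/-- Rotations only destroy edges of the original path that meet the set of reachable heads. -/
theorem Rot_s3.mem_listEdges {V : Type*} {G : SimpleGraph V} {l l' : List V} (h : Rot_s3 G l l')
    (a b : V) (hab : s(a, b) ∈ listEdges l)
    (ha : ∀ t, ¬ Rot_s3 G l (a :: t)) (hb : ∀ t, ¬ Rot_s3 G l (b :: t)) :
    s(a, b) ∈ listEdges l' := by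
  induction h with
  | refl => exact hab
  | step z y A B hr hzy ih =>
    have hst := Rot_s3.step z y A B hr hzy
    obtain ⟨C, w, hC⟩ : ∃ C w, z :: A = C ++ [w] :=
      ⟨_, _, (List.dropLast_append_getLast (List.cons_ne_nil z A)).symm⟩
    rw [hC] at ih hst ⊢
    have hz : ∃ D, C ++ [w] = z :: D := ⟨A, hC.symm⟩
    rw [List.append_assoc, List.singleton_append, listEdges_append] at ih
    simp only [List.mem_append, List.mem_cons] at ih
    have hw : (C ++ [w]).reverse ++ y :: B = w :: (C.reverse ++ y :: B) := by simp
    obtain ⟨D, hD⟩ := hz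
    have hr' : (C ++ [w]).reverse ++ y :: B = D.reverse ++ z :: y :: B := by rw [hD]; simp
    rcases ih with h | h | h
    · rw [hr', listEdges_append]
      refine List.mem_append_left _ ?_
      have : D.reverse ++ [z] = (C ++ [w]).reverse := by rw [hD]; simp
      rw [this, mem_listEdges_reverse]
      exact h
    · exfalso
      rw [hw] at hst
      rw [Sym2.eq_iff] at h
      rcases h with ⟨rfl, _⟩ | ⟨_, rfl⟩
      · exact ha _ hst
      · exact hb _ hst
    · rw [hr', listEdges_append]
      exact List.mem_append_right _ (List.mem_cons_of_mem _ h)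

/-- Pósa's lemma: a neighbour `w` of a reachable head `z` that is not itself a reachable head is
next to one on the original path, unless it is the last vertex. -/
theorem posa {V : Type*} {G : SimpleGraph V} {l : List V} (hnd : l.Nodup)
    {z w : V} {t : List V} (hz : Rot_s3 G l (z :: t)) (hzw : G.Adj z w)
    (hwl : w ∈ l) (hw : ∀ t, ¬ Rot_s3 G l (w :: t)) :
    (∃ A, l = A ++ [w]) ∨
      ∃ v A B, (∃ t, Rot_s3 G l (v :: t)) ∧ (l = A ++ v :: w :: B ∨ l = A ++ w :: v :: B) := by
  by_contra! hcon
  obtain ⟨hlast, hcon⟩ := hcon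
  obtain ⟨X, Y, hXY⟩ := List.append_of_mem hwl
  -- `w` lies strictly inside the path, between `p` and `p'`
  obtain ⟨p', Y', rfl⟩ : ∃ p' Y', Y = p' :: Y' := by
    cases Y with
    | nil => exact absurd hXY (hlast X)
    | cons p' Y' => exact ⟨p', Y', rfl⟩
  obtain ⟨X', p, rfl⟩ : ∃ X' p, X = X' ++ [p] := by
    rcases List.eq_nil_or_concat X with rfl | ⟨X', p, rfl⟩
    · exact absurd (hXY ▸ Rot_s3.refl) (hw (p' :: Y'))
    · exact ⟨X', p, by simp⟩
  rw [List.append_assoc, List.singleton_append] at hXY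
  have hp : ∀ t, ¬ Rot_s3 G l (p :: t) := fun t ht => (hcon p X' (p' :: Y') ⟨t, ht⟩).1 hXY
  have hp' : ∀ t, ¬ Rot_s3 G l (p' :: t) := fun t ht =>
    (hcon p' (X' ++ [p]) Y' ⟨t, ht⟩).2 (by simpa using hXY)
  have e1 : s(p, w) ∈ listEdges l := by
    rw [hXY, listEdges_append]; simp
  have e2 : s(p', w) ∈ listEdges l := by
    have : l = (X' ++ [p]) ++ w :: p' :: Y' := by simpa using hXY
    rw [this, listEdges_append, Sym2.eq_swap]; simp
  have f1 := hz.mem_listEdges _ _ e1 hp hw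
  have f2 := hz.mem_listEdges _ _ e2 hp' hw
  have hwt : w ∈ t := by
    have := hz.perm.mem_iff.mpr hwl
    rcases List.mem_cons.mp this with rfl | h
    · exact absurd hz (hw t)
    · exact h
  obtain ⟨A, B, rfl⟩ := List.append_of_mem hwt
  have hst := Rot_s3.step z w A B hz hzw
  obtain ⟨C, w', hC⟩ : ∃ C w', z :: A = C ++ [w'] :=
    ⟨_, _, (List.dropLast_append_getLast (List.cons_ne_nil z A)).symm⟩
  have hw' : Rot_s3 G l (w' :: (C.reverse ++ w :: B)) := by
    rw [hC] at hst; simpa using hst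
  have hform : z :: (A ++ w :: B) = C ++ w' :: w :: B := by
    rw [← List.cons_append, hC]; simp
  have hnd' : (C ++ w' :: w :: B).Nodup := by
    rw [← hform]; exact hz.perm.nodup_iff.mpr hnd
  rw [hform] at f1 f2
  have g1 := eq_or_head_of_mem_listEdges _ _ _ _ _ hnd' f1
  have g2 := eq_or_head_of_mem_listEdges _ _ _ _ _ hnd' f2
  -- `w` has the three distinct neighbours `p`, `p'` and the reachable head `w'` on the rotated path
  have hpp : p ≠ p' := by
    rintro rfl
    rw [hXY] at hnd
    simp [List.nodup_append] at hnd
  rcases g1 with rfl | ⟨B1, h1⟩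
  · exact hp _ hw'
  rcases g2 with rfl | ⟨B2, h2⟩
  · exact hp' _ hw'
  rw [h1] at h2
  exact hpp (List.cons.inj h2).1

/-! ### Separating all edges -/

/-- Every nonempty vertex set `U` contains a nonempty `S` such that `40 |S|` paths separate every
edge of `G[U]` meeting `S` from every other edge of `G`: take for `S` the heads reachable by
rotations from a longest path in `U`. -/
theorem exists_removable {V : Type*} (G : SimpleGraph V) (U : Finset V) (hU : U.Nonempty) :
    ∃ S ⊆ U, S.Nonempty ∧ ∃ Ps : List ((u : V) × (v : V) × G.Walk u v),
      (∀ p ∈ Ps, p.2.2.IsPath) ∧ Ps.length ≤ 40 * S.card ∧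
      ∀ u ∈ S, ∀ v ∈ U, G.Adj u v → ∀ f, s(u, v) ≠ f →
        ∃ p ∈ Ps, s(u, v) ∈ p.2.2.edges ∧ f ∉ p.2.2.edges := by
  classical
  let good : ℕ → Prop := fun n =>
    ∃ l : List V, l.Nodup ∧ l.IsChain G.Adj ∧ (∀ v ∈ l, v ∈ U) ∧ l.length = n
  have hb : ∀ n, good n → n ≤ U.card := by
    rintro n ⟨l, h1, _, h3, rfl⟩
    rw [← List.toFinset_card_of_nodup h1]
    exact Finset.card_le_card fun v hv => h3 v (List.mem_toFinset.mp hv)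
  obtain ⟨u₀, hu₀⟩ := hU
  have hg1 : good 1 := ⟨[u₀], by simp, by simp, by simpa using hu₀, rfl⟩
  obtain ⟨l, hnd, hch, hlU, hlen⟩ : good (Nat.findGreatest good U.card) :=
    Nat.findGreatest_spec (hb 1 hg1) hg1
  have hmax : ∀ n, good n → n ≤ l.length := fun n hn => by
    rw [hlen]; exact Nat.le_findGreatest (hb n hn) hn
  have hpos : 1 ≤ l.length := hmax 1 hg1
  set S : Finset V := U.filter fun v => ∃ t, Rot_s3 G l (v :: t) with hS
  have hSmem : ∀ v, v ∈ S ↔ ∃ t, Rot_s3 G l (v :: t) := by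
    intro v
    rw [hS, Finset.mem_filter]
    refine ⟨fun h => h.2, fun h => ⟨?_, h⟩⟩
    obtain ⟨t, ht⟩ := h
    exact hlU v (ht.perm.mem_iff.mp (by simp))
  have hSl : ∀ v ∈ S, v ∈ l := by
    intro v hv
    obtain ⟨t, ht⟩ := (hSmem v).mp hv
    exact ht.perm.mem_iff.mp (by simp)
  have hSne : S.Nonempty := by
    cases hl : l with
    | nil => simp [hl] at hpos
    | cons a t => exact ⟨a, (hSmem a).mpr ⟨t, by rw [hl]; exact Rot_s3.refl⟩⟩
  have hN : ∀ u ∈ S, ∀ v ∈ U, G.Adj u v → v ∈ l := by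
    intro u hu v hv huv
    obtain ⟨t, ht⟩ := (hSmem u).mp hu
    by_contra hvl
    have hvt : v ∉ u :: t := fun h => hvl (ht.perm.mem_iff.mp h)
    have := hmax (v :: u :: t).length ⟨v :: u :: t, ?_, ?_, ?_, rfl⟩
    · rw [List.length_cons, ht.perm.length_eq] at this
      omega
    · exact List.nodup_cons.mpr ⟨hvt, ht.perm.nodup_iff.mpr hnd⟩
    · exact List.isChain_cons_cons.mpr ⟨huv.symm, ht.isChain hch⟩
    · intro y hy
      rcases List.mem_cons.mp hy with rfl | hy
      · exact hv
      · exact hlU y (ht.perm.mem_iff.mp hy)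
  set x : ℕ → V := fun i => l.getD i u₀ with hx
  have hxi : ∀ i (h : i < l.length), x i = l[i] := fun i h => by
    simp [hx, h]
  have hinj : ∀ i < l.length, ∀ j < l.length, x i = x j → i = j := by
    intro i hi j hj hij
    rw [hxi i hi, hxi j hj] at hij
    exact (hnd.getElem_inj_iff).mp hij
  have hadj : ∀ i, i + 1 < l.length → G.Adj (x i) (x (i + 1)) := by
    intro i hi
    rw [hxi i (by omega), hxi _ hi]
    exact List.isChain_iff_getElem.mp hch i hi
  set N : Finset V := U.filter fun v => ∃ u ∈ S, G.Adj u v with hNdef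
  have hcard : (S ∪ N).card ≤ 4 * S.card := by
    have hsub : S ∪ N ⊆ S ∪ (S.image (fun v => x (l.idxOf v + 1)) ∪
        (S.image (fun v => x (l.idxOf v - 1)) ∪ {x (l.length - 1)})) := by
      intro w hw
      by_cases hwS : w ∈ S
      · exact Finset.mem_union_left _ hwS
      have hwN : w ∈ N := (Finset.mem_union.mp hw).resolve_left hwS
      obtain ⟨hwU, u, hu, huw⟩ := Finset.mem_filter.mp hwN
      obtain ⟨t, ht⟩ := (hSmem u).mp hu
      refine Finset.mem_union_right _ ?_
      have hw' : ∀ t, ¬ Rot_s3 G l (w :: t) := fun t ht => hwS ((hSmem w).mpr ⟨t, ht⟩)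
      rcases posa hnd ht huw (hN u hu w hwU huw) hw' with ⟨A, hA⟩ | ⟨v, A, B, hv, hAB | hAB⟩
      · refine Finset.mem_union_right _ (Finset.mem_union_right _ (Finset.mem_singleton.mpr ?_))
        simp [hx, hA]
      · refine Finset.mem_union_left _ (Finset.mem_image.mpr ⟨v, (hSmem v).mpr hv, ?_⟩)
        have hvA : v ∉ A := by
          rw [hAB] at hnd; simp [List.nodup_append] at hnd; grind
        simp only [hx, hAB]
        simp [List.idxOf_append_of_notMem hvA]
      · refine Finset.mem_union_right _ (Finset.mem_union_left _
          (Finset.mem_image.mpr ⟨v, (hSmem v).mpr hv, ?_⟩))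
        have hvA : v ∉ A := by
          rw [hAB] at hnd; simp [List.nodup_append] at hnd; grind
        have hvw : w ≠ v := by
          rw [hAB] at hnd; simp [List.nodup_append] at hnd; grind
        simp only [hx, hAB]
        simp [List.idxOf_append_of_notMem hvA, List.idxOf_cons_ne _ hvw]
    have h0 := Finset.card_le_card hsub
    have h1 := Finset.card_union_le S (S.image (fun v => x (l.idxOf v + 1)) ∪
        (S.image (fun v => x (l.idxOf v - 1)) ∪ {x (l.length - 1)}))
    have h2 := Finset.card_union_le (S.image (fun v => x (l.idxOf v + 1)))
        (S.image (fun v => x (l.idxOf v - 1)) ∪ {x (l.length - 1)})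
    have h3 := Finset.card_union_le (S.image (fun v => x (l.idxOf v - 1))) {x (l.length - 1)}
    have h4 : (S.image (fun v => x (l.idxOf v + 1))).card ≤ S.card := Finset.card_image_le
    have h5 : (S.image (fun v => x (l.idxOf v - 1))).card ≤ S.card := Finset.card_image_le
    have h6 := hSne.card_pos
    rw [Finset.card_singleton] at h3
    omega
  obtain ⟨Ps, hP, hlenP, hsep⟩ := exists_paths_of_subset_path G x l.length hinj hadj (S ∪ N) (by
    intro y hy
    have hyl : y ∈ l := by
      rcases Finset.mem_union.mp hy with h | h
      · exact hSl y h
      · obtain ⟨hyU, u, hu, huy⟩ := Finset.mem_filter.mp h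
        exact hN u hu y hyU huy
    obtain ⟨i, hi, rfl⟩ := List.getElem_of_mem hyl
    exact ⟨i, hi, (hxi i hi).symm⟩)
  refine ⟨S, Finset.filter_subset _ _, hSne, Ps, hP, by omega, ?_⟩
  intro u hu v hv huv f hf
  exact hsep u (Finset.mem_union_left _ hu) v
    (Finset.mem_union_right _ (Finset.mem_filter.mpr ⟨hv, u, hu, huv⟩)) huv f hf

/-- For every vertex set `U`, some `40 |U|` paths of `G` separate every edge of `G[U]` from every
other edge. -/
theorem exists_separating {V : Type*} (G : SimpleGraph V) (U : Finset V) :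
    ∃ Ps : List ((u : V) × (v : V) × G.Walk u v),
      (∀ p ∈ Ps, p.2.2.IsPath) ∧ Ps.length ≤ 40 * U.card ∧
      ∀ u ∈ U, ∀ v ∈ U, G.Adj u v → ∀ f, s(u, v) ≠ f →
        ∃ p ∈ Ps, s(u, v) ∈ p.2.2.edges ∧ f ∉ p.2.2.edges := by
  classical
  induction U using Finset.strongInduction with
  | H U ih =>
    rcases U.eq_empty_or_nonempty with rfl | hU
    · exact ⟨[], by simp, by simp, by simp⟩
    obtain ⟨S, hSU, hSne, Ps, hP, hlen, hsep⟩ := exists_removable G U hU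
    obtain ⟨Ps', hP', hlen', hsep'⟩ := ih (U \ S) (Finset.sdiff_ssubset hSU hSne)
    refine ⟨Ps ++ Ps', ?_, ?_, ?_⟩
    · intro p hp
      rcases List.mem_append.mp hp with h | h
      exacts [hP p h, hP' p h]
    · rw [List.length_append]
      have := Finset.card_sdiff_add_card_eq_card hSU
      omega
    · intro u hu v hv huv f hf
      by_cases huS : u ∈ S
      · obtain ⟨p, hp, h⟩ := hsep u huS v hv huv f hf
        exact ⟨p, List.mem_append_left _ hp, h⟩
      by_cases hvS : v ∈ S
      · rw [Sym2.eq_swap] at hf ⊢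
        obtain ⟨p, hp, h⟩ := hsep v hvS u hu huv.symm f hf
        exact ⟨p, List.mem_append_left _ hp, h⟩
      · obtain ⟨p, hp, h⟩ := hsep' u (Finset.mem_sdiff.mpr ⟨hu, huS⟩) v
          (Finset.mem_sdiff.mpr ⟨hv, hvS⟩) huv f hf
        exact ⟨p, List.mem_append_right _ hp, h⟩


/-- The second key lemma. There exists `d₀` such that for every graph `G` on `n`
vertices with average degree `d = 2e(G)/n ≥ d₀`, there are a subgraph `G₁ ⊆ G`, a
collection `ℋ` of mutually edge-disjoint subgraphs of `G`, each on at most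
`2^((log d)^7)` vertices and with total order at most `4n`, and a collection `𝒫` of
at most `80 n` paths that strongly separates the edges of `G` lying neither in `G₁`
nor in any member of `ℋ`; moreover `G₁` has average degree at most `(log d)^3`. -/
theorem key_lemma_reduce_small_deg :
    ∃ d₀ : ℝ, ∀ (V : Type) [Fintype V] (G : SimpleGraph V),
      d₀ ≤ 2 * (G.edgeSet.ncard : ℝ) / (Fintype.card V : ℝ) →
      ∃ (G₁ : SimpleGraph V) (Hs : List G.Subgraph)
        (Ps : List ((u : V) × (v : V) × G.Walk u v)),
        G₁ ≤ G ∧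
        -- (1) the graphs in ℋ are mutually edge-disjoint, small, of total order ≤ 4n
        Hs.Pairwise (fun H K => Disjoint H.edgeSet K.edgeSet) ∧
        (∀ H ∈ Hs, (H.verts.ncard : ℝ) ≤
          (2 : ℝ) ^ ((Real.logb 2 (2 * (G.edgeSet.ncard : ℝ) / (Fintype.card V : ℝ)))^7)) ∧
        (Hs.map fun H => H.verts.ncard).sum ≤ 4 * Fintype.card V ∧
        -- (2) 𝒫 separates the edges of G − G₁ − ⋃ ℋ and has size ≤ 80n
        (∀ p ∈ Ps, p.2.2.IsPath) ∧
        Ps.length ≤ 80 * Fintype.card V ∧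
        (∀ e ∈ G.edgeSet \ (G₁.edgeSet ∪ ⋃ H ∈ Hs, SimpleGraph.Subgraph.edgeSet H),
         ∀ f ∈ G.edgeSet \ (G₁.edgeSet ∪ ⋃ H ∈ Hs, SimpleGraph.Subgraph.edgeSet H),
          e ≠ f → ∃ p ∈ Ps, e ∈ p.2.2.edges ∧ f ∉ p.2.2.edges) ∧
        -- (3) G₁ has average degree at most (log d)^3
        2 * (G₁.edgeSet.ncard : ℝ) / (Fintype.card V : ℝ) ≤
          (Real.logb 2 (2 * (G.edgeSet.ncard : ℝ) / (Fintype.card V : ℝ)))^3 := by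
  refine ⟨1, fun V _ G hd => ?_⟩
  obtain ⟨Ps, hP, hlen, hsep⟩ := exists_separating G (Finset.univ : Finset V)
  refine ⟨⊥, [], Ps, bot_le, by simp, by simp, by simp, hP, ?_, ?_, ?_⟩
  · rw [Finset.card_univ] at hlen
    omega
  · intro e he f _ hef
    induction e with
    | h u v => exact hsep u (Finset.mem_univ u) v (Finset.mem_univ v) he.1 f hef
  · have : 0 ≤ Real.logb 2 (2 * (G.edgeSet.ncard : ℝ) / (Fintype.card V : ℝ)) :=
      Real.logb_nonneg (by norm_num) hd
    simpa using pow_nonneg this 3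
end
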